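/- There exist universal constants c, C > 0 such that the following holds. Let X be an isotropic random vector in ℝⁿ with log-concave density which is ψ_α (α ∈ [1,2]) with constant b_α, and let A be an n×n real matrix with ‖A‖_HS² = n. Set ñ := n/(‖A‖_op²·b_α²). Then P(| |AX| − √n | ≥ t√n) ≤ C·exp(−c·ñ^{α/2}·min(t^{2+α}, t)) for all t ≥ 0. -/

import Mathlib

open MeasureTheory ProbabilityTheory Real
open scoped ENNReal RealInnerProductSpace Pointwise NNReal

noncomputable section

/-- A nonnegative function is log-concave if `f(λx+(1-λ)y) ≥ f(x)^λ f(y)^{1-λ}`. -/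
def IsLogConcaveFn {E : Type*} [AddCommGroup E] [Module ℝ E] (f : E → ℝ) : Prop :=
  (∀ x, 0 ≤ f x) ∧
  ∀ x y : E, ∀ l : ℝ, 0 ≤ l → l ≤ 1 →
    f x ^ l * f y ^ (1 - l) ≤ f (l • x + (1 - l) • y)

/-- Hilbert-Schmidt (Frobenius) norm of a matrix. -/
def hsNorm {n : ℕ} (A : Matrix (Fin n) (Fin n) ℝ) : ℝ :=
  Real.sqrt (∑ i, ∑ j, (A i j) ^ 2)

/-- Operator norm of a matrix acting on Euclidean space. -/
def opNorm {n : ℕ} (A : Matrix (Fin n) (Fin n) ℝ) : ℝ :=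
  ‖LinearMap.toContinuousLinearMap (Matrix.toEuclideanLin A)‖

/-- Application of a matrix to a Euclidean vector. -/
def mApp {n : ℕ} (A : Matrix (Fin n) (Fin n) ℝ) (x : EuclideanSpace ℝ (Fin n)) :
    EuclideanSpace ℝ (Fin n) := Matrix.toEuclideanLin A x

/-- The random vector `X` has density `f` with respect to Lebesgue measure. -/
def HasDensityFn {Ω : Type*} [MeasurableSpace Ω] (P : Measure Ω) {n : ℕ}
    (X : Ω → EuclideanSpace ℝ (Fin n)) (f : EuclideanSpace ℝ (Fin n) → ℝ) : Prop :=
  Measurable X ∧ Measure.map X P = volume.withDensity fun x => ENNReal.ofReal (f x)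

/-- `X` is isotropic: centered with identity covariance. -/
def Isotropic {Ω : Type*} [MeasurableSpace Ω] (P : Measure Ω) {n : ℕ}
    (X : Ω → EuclideanSpace ℝ (Fin n)) : Prop :=
  (∫ ω, X ω ∂P) = 0 ∧
  ∀ θ η : EuclideanSpace ℝ (Fin n), (∫ ω, ⟪X ω, θ⟫ * ⟪X ω, η⟫ ∂P) = ⟪θ, η⟫

/-- `X` is ψ_α with constant `b`. -/
def IsPsiAlpha {Ω : Type*} [MeasurableSpace Ω] (P : Measure Ω) {n : ℕ}
    (X : Ω → EuclideanSpace ℝ (Fin n)) (α b : ℝ) : Prop :=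
  ∀ p : ℝ, 2 ≤ p → ∀ y : EuclideanSpace ℝ (Fin n),
    (∫ ω, |⟪X ω, y⟫| ^ p ∂P) ^ (1/p) ≤ b * p ^ (1/α) * (∫ ω, ⟪X ω, y⟫ ^ 2 ∂P) ^ ((1:ℝ)/2)

/-- `G` is a standard Gaussian random vector in `ℝⁿ`. -/
def IsStdGaussian {Ω : Type*} [MeasurableSpace Ω] (P : Measure Ω) {n : ℕ}
    (G : Ω → EuclideanSpace ℝ (Fin n)) : Prop :=
  Measurable G ∧
  Measure.map G P = volume.withDensity fun x =>
    ENNReal.ofReal ((2 * π) ^ (-(n:ℝ)/2) * Real.exp (-‖x‖ ^ 2 / 2))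

/-- Surface area of the unit sphere `S^{k-1}` in `ℝᵏ`. -/
def sphereVol (k : ℕ) : ℝ := 2 * π ^ ((k : ℝ)/2) / Real.Gamma ((k : ℝ)/2)

/-- The marginal density `π_F g(x) = ∫_{F^⊥} g(x+y) dy`. -/
def marginalDensity {n : ℕ} (g : EuclideanSpace ℝ (Fin n) → ℝ)
    (F : Submodule ℝ (EuclideanSpace ℝ (Fin n))) (x : EuclideanSpace ℝ (Fin n)) : ℝ :=
  ∫ y : Fᗮ, g (x + y)

/-- `h_{k,p}(u) = vol(S^{k-1}) ∫₀^∞ t^{p+k-1} π_{u(E₀)} g(t u(θ₀)) dt`. -/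
def hkp {n : ℕ} (g : EuclideanSpace ℝ (Fin n) → ℝ)
    (E₀ : Submodule ℝ (EuclideanSpace ℝ (Fin n))) (θ₀ : EuclideanSpace ℝ (Fin n))
    (k : ℕ) (p : ℝ) (u : Matrix (Fin n) (Fin n) ℝ) : ℝ :=
  sphereVol k * ∫ t in Set.Ioi (0:ℝ), t ^ (p + (k:ℝ) - 1) *
    marginalDensity g (Submodule.map (Matrix.toEuclideanLin u) E₀) (t • mApp u θ₀)

/-- Support functional of the one-sided L_q-centroid body `Z⁺_q(w)`. -/
def suppZplus {m : ℕ} (w : EuclideanSpace ℝ (Fin m) → ℝ) (q : ℝ)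
    (y : EuclideanSpace ℝ (Fin m)) : ℝ :=
  (2 * ∫ x, (max ⟪x, y⟫ 0) ^ q * w x) ^ (1/q)

/-- Ball's body `K_q(w) = {x : q ∫₀^∞ t^{q-1} w(tx) dt ≥ 1}`. -/
def ballBody {m : ℕ} (w : EuclideanSpace ℝ (Fin m) → ℝ) (q : ℝ) :
    Set (EuclideanSpace ℝ (Fin m)) :=
  {x | 1 ≤ q * ∫ t in Set.Ioi (0:ℝ), t ^ (q-1) * w (t • x)}

/-- The one-sided L_q-centroid body `Z⁺_q(w)`, as the convex set with support
functional `suppZplus w q`. -/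
def ZplusBody {m : ℕ} (w : EuclideanSpace ℝ (Fin m) → ℝ) (q : ℝ) :
    Set (EuclideanSpace ℝ (Fin m)) :=
  {x | ∀ y, ⟪x, y⟫ ≤ suppZplus w q y}

lemma bm_compact {A B : Set ℝ} (hA : IsCompact A) (hB : IsCompact B) (hA' : A.Nonempty)
    (hB' : B.Nonempty) : volume A + volume B ≤ volume (A + B) := by
  set a := sSup A
  set b := sInf B
  have ha : a ∈ A := hA.sSup_mem hA'
  have hb : b ∈ B := hB.sInf_mem hB'
  have h1 : (fun x => x + b) '' A ∪ (fun x => a + x) '' B ⊆ A + B := by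
    rintro x (⟨y, hy, rfl⟩ | ⟨y, hy, rfl⟩)
    · exact Set.add_mem_add hy hb
    · exact Set.add_mem_add ha hy
  have h2 : (fun x => x + b) '' A ∩ (fun x => a + x) '' B ⊆ {a + b} := by
    rintro x ⟨⟨y, hy, rfl⟩, ⟨z, hz, h⟩⟩
    have e1 : y ≤ a := le_csSup hA.bddAbove hy
    have e2 : b ≤ z := csInf_le hB.bddBelow hz
    simp only [Set.mem_singleton_iff] at *
    linarith
  have m2 : MeasurableSet ((fun x => a + x) '' B) :=
    (hB.image (by fun_prop)).measurableSet
  have hv1 : volume ((fun x => x + b) '' A) = volume A := by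
    simp
  have hv2 : volume ((fun x => a + x) '' B) = volume B := by
    simp
  have h3 := measure_union_add_inter (μ := volume) ((fun x => x + b) '' A) m2
  have h4 : volume ((fun x => x + b) '' A ∩ (fun x => a + x) '' B) = 0 :=
    measure_mono_null h2 (by simp)
  rw [h4, add_zero, hv1, hv2] at h3
  rw [← h3]
  exact measure_mono h1

lemma bm_meas {A B C : Set ℝ} (hA : MeasurableSet A) (hB : MeasurableSet B) (hA' : A.Nonempty)
    (hB' : B.Nonempty) (h : ∀ x ∈ A, ∀ y ∈ B, (x + y) / 2 ∈ C) :
    volume A + volume B ≤ 2 * volume C := by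
  have key : volume (A + B) ≤ 2 * volume C := by
    have : A + B ⊆ (2 : ℝ) • C := by
      rintro z ⟨x, hx, y, hy, rfl⟩
      exact ⟨_, h x hx y hy, by simp; ring⟩
    refine (measure_mono this).trans ?_
    rw [Measure.addHaar_smul]
    simp
  refine le_trans ?_ key
  obtain ⟨a, ha⟩ := hA'
  obtain ⟨b, hb⟩ := hB'
  by_contra hcon
  push Not at hcon
  have hA0 : volume A ≠ 0 := by
    intro h0
    rw [h0, zero_add] at hcon
    have h3 : (fun y => a + y) '' B ⊆ A + B := by
      rintro z ⟨y, hy, rfl⟩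
      exact ⟨a, ha, y, hy, rfl⟩
    have h4 := measure_mono (μ := volume) h3
    rw [Set.image_add_left, measure_preimage_add] at h4
    exact absurd hcon (not_lt.2 h4)
  have hB0 : volume B ≠ 0 := by
    intro h0
    rw [h0, add_zero] at hcon
    have h3 : (fun y => y + b) '' A ⊆ A + B := by
      rintro z ⟨y, hy, rfl⟩
      exact ⟨y, hy, b, hb, rfl⟩
    have h4 := measure_mono (μ := volume) h3
    rw [Set.image_add_right, measure_preimage_add_right] at h4
    exact absurd hcon (not_lt.2 h4)
  have hx : ∃ r < volume A, ∃ r' < volume B, volume (A + B) < r + r' :=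
    ENNReal.exists_lt_add_of_lt_add hcon hA0 hB0
  obtain ⟨r, hr, r', hr', hcon⟩ := hx
  refine absurd hcon (not_lt.2 ?_)
  obtain ⟨K, hK, cK, hlt⟩ := hA.exists_lt_isCompact hr
  obtain ⟨K', hK', cK', hlt'⟩ := hB.exists_lt_isCompact hr'
  have h1 := bm_compact (cK.insert a) (cK'.insert b) (Set.insert_nonempty _ _)
    (Set.insert_nonempty _ _)
  have h2 : insert a K + insert b K' ⊆ A + B :=
    Set.add_subset_add (Set.insert_subset ha hK) (Set.insert_subset hb hK')
  calc r + r' ≤ volume K + volume K' := add_le_add hlt.le hlt'.le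
    _ ≤ volume (insert a K) + volume (insert b K') := by
        gcongr <;> exact Set.subset_insert _ _
    _ ≤ _ := h1.trans (measure_mono h2)

/-- normalized one-dimensional Prekopa-Leindler -/
lemma pl_one_norm {f g h : ℝ → ℝ} (hf : Measurable f) (hg : Measurable g) (hh : Measurable h)
    (f0 : ∀ x, 0 ≤ f x) (g0 : ∀ x, 0 ≤ g x) (h0 : ∀ x, 0 ≤ h x)
    (f1 : ∀ x, f x ≤ 1) (g1 : ∀ x, g x ≤ 1)
    (fs : ∀ s < 1, ∃ x, s < f x) (gs : ∀ s < 1, ∃ x, s < g x)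
    (H : ∀ x y, f x * g y ≤ h ((x + y) / 2) ^ 2) :
    (∫⁻ x, ENNReal.ofReal (f x)) + (∫⁻ x, ENNReal.ofReal (g x)) ≤ 2 * ∫⁻ x, ENNReal.ofReal (h x) := by
  rw [lintegral_eq_lintegral_meas_lt _ (.of_forall f0) hf.aemeasurable,
    lintegral_eq_lintegral_meas_lt _ (.of_forall g0) hg.aemeasurable,
    lintegral_eq_lintegral_meas_lt _ (.of_forall h0) hh.aemeasurable]
  have mf : Measurable fun t => volume {a | t < f a} :=
    Antitone.measurable (fun s t hst => measure_mono fun x hx => lt_of_le_of_lt hst hx)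
  rw [← lintegral_add_left mf, ← lintegral_const_mul' _ _ (by simp)]
  refine setLIntegral_mono' measurableSet_Ioi ?_
  intro t ht
  have ht : 0 < t := ht
  rcases lt_or_ge t 1 with h1 | h1
  · refine bm_meas (measurableSet_lt measurable_const hf) (measurableSet_lt measurable_const hg)
      (fs t h1) (gs t h1) ?_
    intro x hx y hy
    have hx : t < f x := hx
    have hy : t < g y := hy
    have := H x y
    show t < h _
    by_contra hc
    push Not at hc
    nlinarith [h0 ((x+y)/2), mul_lt_mul'' hx hy ht.le ht.le]
  · have e1 : {a | t < f a} = ∅ := by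
      ext x; simp; linarith [f1 x]
    have e2 : {a | t < g a} = ∅ := by
      ext x; simp; linarith [g1 x]
    rw [e1, e2]; simp

lemma ennreal_amgm {u v w : ℝ≥0∞} (h : u + v ≤ 2 * w) : u * v ≤ w ^ 2 := by
  rcases eq_or_ne w ∞ with rfl | hw
  · simp
  have h2 : u + v ≠ ∞ := ne_top_of_le_ne_top (by finiteness) h
  have hu : u ≠ ∞ := by intro h; simp [h] at h2
  have hv : v ≠ ∞ := by intro h; simp [h] at h2
  lift u to ℝ≥0 using hu
  lift v to ℝ≥0 using hv
  lift w to ℝ≥0 using hw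
  have h' : u + v ≤ 2 * w := by exact_mod_cast h
  have : u * v ≤ w ^ 2 := by
    rw [← NNReal.coe_le_coe] at *
    push_cast at *
    nlinarith [sq_nonneg ((u:ℝ) - v), u.2, v.2, w.2, pow_le_pow_left₀ (by positivity) h' 2]
  exact_mod_cast this

lemma pl_one_bdd {f g h : ℝ → ℝ≥0∞} (hf : Measurable f) (hg : Measurable g) (hh : Measurable h)
    (hF : (⨆ x, f x) ≠ ∞) (hG : (⨆ x, g x) ≠ ∞)
    (H : ∀ x y, f x * g y ≤ h ((x + y) / 2) ^ 2) :
    (∫⁻ x, f x) * (∫⁻ x, g x) ≤ (∫⁻ x, h x) ^ 2 := by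
  set F := ⨆ x, f x with hFd
  set G := ⨆ x, g x with hGd
  have fF : ∀ x, f x ≤ F := fun x => le_iSup f x
  have gG : ∀ x, g x ≤ G := fun x => le_iSup g x
  rcases eq_or_ne F 0 with F0 | F0
  · have : ∀ x, f x = 0 := fun x => by simpa [F0] using fF x
    simp [this]
  rcases eq_or_ne G 0 with G0 | G0
  · have : ∀ x, g x = 0 := fun x => by simpa [G0] using gG x
    simp [this]
  set S : ℝ≥0∞ := (F * G) ^ (1/2 : ℝ) with hS
  have S2 : S ^ 2 = F * G := by
    rw [hS, ← ENNReal.rpow_natCast, ← ENNReal.rpow_mul]; norm_num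
  have S0 : S ≠ 0 := by
    intro h; rw [h] at S2; simp at S2; tauto
  have St : S ≠ ∞ := by
    intro h; rw [h] at S2
    have : F * G ≠ ∞ := ENNReal.mul_ne_top hF hG
    simp at S2; exact this S2.symm
  have f1 : ∀ x, f x / F ≤ 1 := fun x => ENNReal.div_le_of_le_mul (by simpa using fF x)
  have g1 : ∀ x, g x / G ≤ 1 := fun x => ENNReal.div_le_of_le_mul (by simpa using gG x)
  have sup : ∀ (f : ℝ → ℝ≥0∞) (F : ℝ≥0∞), F = ⨆ x, f x → F ≠ ∞ → F ≠ 0 → (∀ x, f x / F ≤ 1) →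
      ∀ s < (1:ℝ), ∃ x, s < (f x / F).toReal := by
    intro f F hF Ft F0 f1 s hs
    rcases lt_or_ge s 0 with s0 | s0
    · exact ⟨0, s0.trans_le ENNReal.toReal_nonneg⟩
    have : ENNReal.ofReal s * F < F := by
      conv_rhs => rw [← one_mul F]
      exact ENNReal.mul_lt_mul_left F0 Ft (by simpa using hs)
    conv_rhs at this => rw [hF]
    obtain ⟨x, hx⟩ := lt_iSup_iff.1 this
    refine ⟨x, ?_⟩
    rw [← ENNReal.ofReal_lt_iff_lt_toReal s0 (ne_top_of_le_ne_top (by simp) (f1 x))]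
    rwa [ENNReal.lt_div_iff_mul_lt (.inl F0) (.inl Ft)]
  have key := pl_one_norm (f := fun x => (f x / F).toReal) (g := fun x => (g x / G).toReal)
    (h := fun x => (min (h x / S) 1).toReal) (by fun_prop) (by fun_prop)
    (((hh.div_const S).min measurable_const).ennreal_toReal)
    (fun x => ENNReal.toReal_nonneg) (fun x => ENNReal.toReal_nonneg)
    (fun x => ENNReal.toReal_nonneg)
    (fun x => ENNReal.toReal_le_of_le_ofReal (by simp) (by simpa using f1 x))
    (fun x => ENNReal.toReal_le_of_le_ofReal (by simp) (by simpa using g1 x))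
    (sup f F hFd hF F0 f1) (sup g G hGd hG G0 g1) ?_
  · have e1 : ∀ x, ENNReal.ofReal ((f x / F).toReal) = f x / F := fun x =>
      ENNReal.ofReal_toReal (ne_top_of_le_ne_top (by simp) (f1 x))
    have e2 : ∀ x, ENNReal.ofReal ((g x / G).toReal) = g x / G := fun x =>
      ENNReal.ofReal_toReal (ne_top_of_le_ne_top (by simp) (g1 x))
    have e3 : ∀ x, ENNReal.ofReal ((min (h x / S) 1).toReal) ≤ h x / S := fun x => by
      rw [ENNReal.ofReal_toReal (ne_top_of_le_ne_top (by simp) (min_le_right _ _))]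
      exact min_le_left _ _
    simp_rw [e1, e2] at key
    have key2 := ennreal_amgm (key.trans (mul_le_mul_right (lintegral_mono e3) 2))
    simp_rw [div_eq_mul_inv] at key2
    rw [lintegral_mul_const _ hf, lintegral_mul_const _ hg, lintegral_mul_const _ hh] at key2
    calc (∫⁻ x, f x) * (∫⁻ x, g x)
        = (F * G) * (((∫⁻ x, f x) * F⁻¹) * ((∫⁻ x, g x) * G⁻¹)) := by
          have a1 : F * F⁻¹ = 1 := ENNReal.mul_inv_cancel F0 hF
          have a2 : G * G⁻¹ = 1 := ENNReal.mul_inv_cancel G0 hG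
          calc _ = (∫⁻ x, f x) * (∫⁻ x, g x) * (F * F⁻¹) * (G * G⁻¹) := by rw [a1, a2]; simp
            _ = _ := by ring
      _ ≤ S ^ 2 * ((∫⁻ x, h x) * S⁻¹) ^ 2 := by rw [S2]; gcongr
      _ = (∫⁻ x, h x) ^ 2 := by
          have a1 : S * S⁻¹ = 1 := ENNReal.mul_inv_cancel S0 St
          calc _ = (∫⁻ x, h x) ^ 2 * (S * S⁻¹) ^ 2 := by ring
            _ = _ := by rw [a1]; simp
  · intro x y
    rw [← ENNReal.toReal_mul, ← ENNReal.toReal_pow]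
    refine ENNReal.toReal_mono (by
      refine ENNReal.pow_ne_top (ne_top_of_le_ne_top ENNReal.one_ne_top (min_le_right _ _))) ?_
    rcases le_total (h ((x+y)/2) / S) 1 with hc | hc
    · rw [min_eq_left hc]
      simp_rw [div_eq_mul_inv]
      calc f x * F⁻¹ * (g y * G⁻¹) = f x * g y * (F⁻¹ * G⁻¹) := by ring
        _ ≤ (h ((x+y)/2))^2 * (F⁻¹ * G⁻¹) := by gcongr; exact H x y
        _ = _ := by
          rw [mul_pow, ← ENNReal.inv_pow, S2, ENNReal.mul_inv (.inl F0) (.inl hF)]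
          simp [div_eq_mul_inv]
    · rw [min_eq_right hc]
      simpa using mul_le_mul' (f1 x) (g1 y)

lemma pl_one {f g h : ℝ → ℝ≥0∞} (hf : Measurable f) (hg : Measurable g) (hh : Measurable h)
    (H : ∀ x y, f x * g y ≤ h ((x + y) / 2) ^ 2) :
    (∫⁻ x, f x) * (∫⁻ x, g x) ≤ (∫⁻ x, h x) ^ 2 := by
  have tr : ∀ f : ℝ → ℝ≥0∞, Measurable f → ∫⁻ x, f x = ⨆ N : ℕ, ∫⁻ x, min (f x) N := by
    intro f hf
    rw [← lintegral_iSup (fun N => hf.min measurable_const)]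
    · congr 1; ext x
      rw [← inf_iSup_eq, ENNReal.iSup_natCast]; simp
    · intro a b hab x
      exact min_le_min le_rfl (by exact_mod_cast hab)
  rw [tr f hf, tr g hg, ENNReal.iSup_mul]
  refine iSup_le fun N => ?_
  rw [ENNReal.mul_iSup]
  refine iSup_le fun M => ?_
  refine pl_one_bdd (hf.min measurable_const) (hg.min measurable_const) hh ?_ ?_ ?_
  · exact ne_top_of_le_ne_top (ENNReal.natCast_ne_top N) (iSup_le fun x => min_le_right _ _)
  · exact ne_top_of_le_ne_top (ENNReal.natCast_ne_top M) (iSup_le fun x => min_le_right _ _)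
  · intro x y
    exact le_trans (mul_le_mul' (min_le_left _ _) (min_le_left _ _)) (H x y)

lemma pl_pi (n : ℕ) {f g h : (Fin n → ℝ) → ℝ≥0∞} (hf : Measurable f) (hg : Measurable g)
    (hh : Measurable h) (H : ∀ x y, f x * g y ≤ h ((1/2 : ℝ) • (x + y)) ^ 2) :
    (∫⁻ x, f x) * (∫⁻ x, g x) ≤ (∫⁻ x, h x) ^ 2 := by
  induction n with
  | zero =>
    have e : ∀ f : (Fin 0 → ℝ) → ℝ≥0∞, ∫⁻ x, f x = f 0 := by
      intro f
      rw [volume_pi, Measure.pi_of_empty, lintegral_dirac]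
      congr 1; exact Subsingleton.elim _ _
    rw [e, e, e]
    simpa using H 0 0
  | succ n ih =>
    have mp := (volume_preserving_piFinSuccAbove (fun _ : Fin (n+1) => ℝ) 0).symm
    have e : ∀ f : (Fin (n+1) → ℝ) → ℝ≥0∞, Measurable f → ∫⁻ x, f x = ∫⁻ x : ℝ, ∫⁻ y : Fin n → ℝ,
        f (Fin.cons x y) := by
      intro f hf
      rw [← mp.lintegral_comp hf]
      rw [Measure.volume_eq_prod]
      refine (lintegral_prod _ (hf.comp mp.measurable).aemeasurable).trans ?_
      simp [Fin.insertNthEquiv]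
    have m : ∀ f : (Fin (n+1) → ℝ) → ℝ≥0∞, Measurable f →
        Measurable fun p : ℝ × (Fin n → ℝ) => f (Fin.cons p.1 p.2) := by
      intro f hf
      refine hf.comp ?_
      refine measurable_pi_iff.2 fun i => ?_
      refine Fin.cases ?_ (fun j => ?_) i
      · simpa using measurable_fst
      · simp only [Fin.cons_succ]; fun_prop
    rw [e f hf, e g hg, e h hh]
    refine pl_one (m f hf).lintegral_prod_right' (m g hg).lintegral_prod_right'
      (m h hh).lintegral_prod_right' ?_
    intro x y
    refine ih ((m f hf).comp measurable_prodMk_left) ((m g hg).comp measurable_prodMk_left)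
      ((m h hh).comp measurable_prodMk_left) ?_
    intro u v
    refine (H _ _).trans (le_of_eq ?_)
    congr 2
    ext i
    refine Fin.cases ?_ (fun j => ?_) i
    · simp; ring
    · simp; ring

/-- Prekopa-Leindler (midpoint version) in Euclidean space. -/
lemma pl_euclid (n : ℕ) {f g h : EuclideanSpace ℝ (Fin n) → ℝ≥0∞}
    (hh : AEMeasurable h) (H : ∀ x y, f x * g y ≤ h ((1/2 : ℝ) • (x + y)) ^ 2) :
    (∫⁻ x, f x) * (∫⁻ x, g x) ≤ (∫⁻ x, h x) ^ 2 := by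
  obtain ⟨f', mf, lf, ef⟩ := exists_measurable_le_lintegral_eq (μ := volume) f
  obtain ⟨g', mg, lg, eg⟩ := exists_measurable_le_lintegral_eq (μ := volume) g
  obtain ⟨s, hs, ms, s0⟩ := exists_measurable_superset_of_null
    (show volume {x | ¬ h x = hh.mk h x} = 0 from hh.ae_eq_mk)
  classical
  set h' : EuclideanSpace ℝ (Fin n) → ℝ≥0∞ := s.piecewise (fun _ => ∞) (hh.mk h) with hh'
  have mh : Measurable h' := Measurable.piecewise ms measurable_const hh.measurable_mk
  have lh : ∀ x, h x ≤ h' x := by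
    intro x
    by_cases hx : x ∈ s
    · simp [hh', hx]
    · have : h x = hh.mk h x := by
        by_contra hc; exact hx (hs hc)
      simp [hh', hx, ← this]
  have eh : ∫⁻ x, h x = ∫⁻ x, h' x := by
    refine lintegral_congr_ae ?_
    have : ∀ᵐ x, x ∉ s := measure_eq_zero_iff_ae_notMem.1 s0
    filter_upwards [this, hh.ae_eq_mk] with x hx h2
    simp [hh', hx, ← h2]
  rw [ef, eg, eh]
  have mp := PiLp.volume_preserving_toLp (Fin n)
  rw [← mp.lintegral_comp mf, ← mp.lintegral_comp mg, ← mp.lintegral_comp mh]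
  refine pl_pi n (mf.comp mp.measurable) (mg.comp mp.measurable) (mh.comp mp.measurable) ?_
  intro x y
  refine le_trans (mul_le_mul' (lf _) (lg _)) ((H _ _).trans ?_)
  refine le_trans (pow_le_pow_left' (lh _) 2) ?_
  rfl

/-- A measure satisfying the (midpoint) Prekopa-Leindler inequality. -/
def PLMeas {n : ℕ} (μ : Measure (EuclideanSpace ℝ (Fin n))) : Prop :=
  ∀ u v w : EuclideanSpace ℝ (Fin n) → ℝ≥0∞, Measurable u → Measurable v → Measurable w →
    (∀ x y, u x * v y ≤ w ((1/2 : ℝ) • (x + y)) ^ 2) →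
    (∫⁻ x, u x ∂μ) * (∫⁻ x, v x ∂μ) ≤ (∫⁻ x, w x ∂μ) ^ 2

lemma logconcave_aemeasurable {n : ℕ} {f : EuclideanSpace ℝ (Fin n) → ℝ} (hf : IsLogConcaveFn f) :
    AEMeasurable f volume := by
  have hc : ∀ c : ℝ, Convex ℝ {x | c < f x} := by
    intro c x hx y hy a b ha hb hab
    have hx : c < f x := hx
    have hy : c < f y := hy
    show c < f _
    have hb' : b = 1 - a := by linarith
    subst hb'
    have h1 := hf.2 x y a ha (by linarith)
    set m := min (f x) (f y) with hm
    have hm0 : 0 ≤ m := le_min (hf.1 x) (hf.1 y)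
    have hcm : c < m := lt_min hx hy
    rcases hm0.eq_or_lt with h0 | h0
    · have := hf.1 (a • x + (1 - a) • y)
      linarith
    · have h2 : m = m ^ a * m ^ (1 - a) := by
        rw [← Real.rpow_add h0]; simp
      have h3 : m ^ a * m ^ (1 - a) ≤ f x ^ a * f y ^ (1 - a) := by
        gcongr
        · exact Real.rpow_nonneg (hf.1 x) _
        · exact min_le_left _ _
        · exact min_le_right _ _
      linarith
  have : NullMeasurable f (volume : Measure (EuclideanSpace ℝ (Fin n))) := by
    refine @measurable_of_Ioi ℝ (NullMeasurableSpace (EuclideanSpace ℝ (Fin n)) volume) _ _ _ _ _ _ _ f ?_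
    intro c
    exact (hc c).nullMeasurableSet volume
  exact this.aemeasurable

lemma plmeas_of_logconcave {n : ℕ} {f : EuclideanSpace ℝ (Fin n) → ℝ} (hf : IsLogConcaveFn f) :
    PLMeas (volume.withDensity fun x => ENNReal.ofReal (f x)) := by
  intro u v w hu hv hw H
  have mf := (logconcave_aemeasurable hf).ennreal_ofReal
  rw [lintegral_withDensity_eq_lintegral_mul₀ mf hu.aemeasurable,
    lintegral_withDensity_eq_lintegral_mul₀ mf hv.aemeasurable,
    lintegral_withDensity_eq_lintegral_mul₀ mf hw.aemeasurable]
  refine pl_euclid n (mf.mul hw.aemeasurable) ?_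
  intro x y
  have h1 := hf.2 x y (1/2) (by norm_num) (by norm_num)
  have h2 : f x * f y ≤ f ((1/2 : ℝ) • (x + y)) ^ 2 := by
    have e : (1/2 : ℝ) • x + (1 - 1/2 : ℝ) • y = (1/2 : ℝ) • (x + y) := by
      rw [smul_add]; norm_num
    rw [e] at h1
    have e1 : (f x ^ (1/2 : ℝ)) ^ 2 = f x := by
      rw [← Real.rpow_natCast, ← Real.rpow_mul (hf.1 x)]; norm_num
    have e2 : (f y ^ (1/2 : ℝ)) ^ 2 = f y := by
      rw [← Real.rpow_natCast, ← Real.rpow_mul (hf.1 y)]; norm_num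
    norm_num at h1
    calc f x * f y = (f x ^ (1/2 : ℝ) * f y ^ (1/2 : ℝ)) ^ 2 := by rw [mul_pow, e1, e2]
      _ ≤ _ := by
        gcongr
        · exact mul_nonneg (Real.rpow_nonneg (hf.1 x) _) (Real.rpow_nonneg (hf.1 y) _)
        · simpa using h1
  simp only [Pi.mul_apply]
  calc ENNReal.ofReal (f x) * u x * (ENNReal.ofReal (f y) * v y)
      = ENNReal.ofReal (f x * f y) * (u x * v y) := by
        rw [ENNReal.ofReal_mul (hf.1 x)]; ring
    _ ≤ ENNReal.ofReal (f ((1/2 : ℝ) • (x + y)) ^ 2) * w ((1/2 : ℝ) • (x + y)) ^ 2 := by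
        gcongr
        exact H x y
    _ = _ := by
        rw [ENNReal.ofReal_pow (hf.1 _), mul_pow]

lemma PLMeas.map {n m : ℕ} {μ : Measure (EuclideanSpace ℝ (Fin n))} (h : PLMeas μ)
    (L : EuclideanSpace ℝ (Fin n) →L[ℝ] EuclideanSpace ℝ (Fin m)) : PLMeas (μ.map L) := by
  intro u v w hu hv hw H
  have mL : Measurable L := L.continuous.measurable
  rw [lintegral_map hu mL, lintegral_map hv mL, lintegral_map hw mL]
  refine h _ _ _ (hu.comp mL) (hv.comp mL) (hw.comp mL) ?_
  intro x y
  have := H (L x) (L y)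
  simpa [map_smul, map_add] using this

/-- annulus -/
def annu {n : ℕ} (lo hi : ℝ) : Set (EuclideanSpace ℝ (Fin n)) := {z | lo ≤ ‖z‖ ∧ ‖z‖ ≤ hi}

lemma measurableSet_annu {n : ℕ} (lo hi : ℝ) : MeasurableSet (annu (n := n) lo hi) :=
  (measurableSet_le measurable_const measurable_norm).inter
    (measurableSet_le measurable_norm measurable_const)

lemma borell_step {n : ℕ} {μ : Measure (EuclideanSpace ℝ (Fin n))} (h : PLMeas μ) (r lo hi : ℝ) :
    μ (annu lo hi) * μ {z | ‖z‖ ≤ 2 * r} ≤ μ (annu (lo / 2 - r) (hi / 2 + r)) ^ 2 := by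
  have mB : MeasurableSet {z : EuclideanSpace ℝ (Fin n) | ‖z‖ ≤ 2 * r} :=
    measurableSet_le measurable_norm measurable_const
  have mA := measurableSet_annu (n := n) lo hi
  have mC := measurableSet_annu (n := n) (lo / 2 - r) (hi / 2 + r)
  have := h ((annu lo hi).indicator 1) ({z | ‖z‖ ≤ 2 * r}.indicator 1)
    ((annu (lo / 2 - r) (hi / 2 + r)).indicator 1)
    (measurable_one.indicator mA) (measurable_one.indicator mB) (measurable_one.indicator mC) ?_
  · simpa [lintegral_indicator_one, mA, mB, mC] using this
  intro x y
  by_cases hx : x ∈ annu lo hi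
  · by_cases hy : y ∈ {z : EuclideanSpace ℝ (Fin n) | ‖z‖ ≤ 2 * r}
    · have hz : (1/2 : ℝ) • (x + y) ∈ annu (n := n) (lo / 2 - r) (hi / 2 + r) := by
        obtain ⟨h1, h2⟩ := hx
        have h3 : ‖y‖ ≤ 2 * r := hy
        have h4 := norm_add_le x y
        have h5 := norm_sub_le (x + y) y
        rw [add_sub_cancel_right] at h5
        constructor <;> rw [norm_smul, Real.norm_of_nonneg (by norm_num : (0:ℝ) ≤ 1/2)] <;> linarith
      rw [Set.indicator_of_mem hx, Set.indicator_of_mem hy, Set.indicator_of_mem hz]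
      simp
    · simp [hy]
  · simp [hx]

lemma borell_iter {n : ℕ} {μ : Measure (EuclideanSpace ℝ (Fin n))} (h : PLMeas μ) (r : ℝ) (j : ℕ) :
    ∀ lo hi : ℝ, μ (annu lo hi) * μ {z | ‖z‖ ≤ 2 * r} ^ (2 ^ j - 1) ≤
      μ (annu (lo / 2 ^ j - 2 * r * (1 - 1 / 2 ^ j)) (hi / 2 ^ j + 2 * r * (1 - 1 / 2 ^ j))) ^ (2 ^ j) := by
  induction j with
  | zero => intro lo hi; simp
  | succ j ih =>
    intro lo hi
    have h1 := borell_step h r lo hi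
    have h2 := ih (lo / 2 - r) (hi / 2 + r)
    have e : 2 ^ (j + 1) - 1 = 1 + 2 * (2 ^ j - 1) := by
      have := Nat.one_le_two_pow (n := j)
      rw [pow_succ]; omega
    have e1 : (lo / 2 - r) / 2 ^ j - 2 * r * (1 - 1 / 2 ^ j)
        = lo / 2 ^ (j + 1) - 2 * r * (1 - 1 / 2 ^ (j + 1)) := by
      rw [pow_succ]; field_simp; ring
    have e2 : (hi / 2 + r) / 2 ^ j + 2 * r * (1 - 1 / 2 ^ j)
        = hi / 2 ^ (j + 1) + 2 * r * (1 - 1 / 2 ^ (j + 1)) := by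
      rw [pow_succ]; field_simp; ring
    rw [e1, e2] at h2
    set m := μ {z | ‖z‖ ≤ 2 * r}
    calc μ (annu lo hi) * m ^ (2 ^ (j + 1) - 1)
        = (μ (annu lo hi) * m) * (m ^ (2 ^ j - 1)) ^ 2 := by
          rw [e, pow_add, pow_one, pow_mul', mul_assoc]
      _ ≤ (μ (annu (lo / 2 - r) (hi / 2 + r))) ^ 2 * (m ^ (2 ^ j - 1)) ^ 2 := by gcongr
      _ = (μ (annu (lo / 2 - r) (hi / 2 + r)) * m ^ (2 ^ j - 1)) ^ 2 := by rw [mul_pow]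
      _ ≤ _ := by
        refine (pow_le_pow_left' h2 2).trans ?_
        rw [← pow_mul, ← pow_succ]

lemma borell_annu {n : ℕ} {μ : Measure (EuclideanSpace ℝ (Fin n))} [IsProbabilityMeasure μ]
    (h : PLMeas μ) {r : ℝ} (hr : 0 < r) (hm : 3/4 ≤ μ.real {z | ‖z‖ ≤ 2 * r}) (j : ℕ) :
    μ.real (annu (7 * 2 ^ j * r) (14 * 2 ^ j * r)) ≤
      (4/3 * μ.real (annu (5 * r) (16 * r))) ^ (2 ^ j) := by
  have h1 := borell_iter h r j (7 * 2 ^ j * r) (14 * 2 ^ j * r)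
  have h2 := ENNReal.toReal_mono (by finiteness) h1
  rw [ENNReal.toReal_mul, ENNReal.toReal_pow, ENNReal.toReal_pow] at h2
  have h3 : (μ (annu (7 * 2 ^ j * r / 2 ^ j - 2 * r * (1 - 1 / 2 ^ j))
      (14 * 2 ^ j * r / 2 ^ j + 2 * r * (1 - 1 / 2 ^ j)))).toReal ≤ μ.real (annu (5 * r) (16 * r)) := by
    refine measureReal_mono ?_
    rintro z ⟨hz1, hz2⟩
    have e1 : 7 * 2 ^ j * r / 2 ^ j = 7 * r := by field_simp
    have e2 : 14 * 2 ^ j * r / 2 ^ j = 14 * r := by field_simp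
    rw [e1] at hz1; rw [e2] at hz2
    have : 0 < r * (1 / 2 ^ j : ℝ) := by positivity
    constructor <;> nlinarith
  change μ.real _ * μ.real _ ^ _ ≤ _ at h2
  set q := μ.real (annu (n := n) (5 * r) (16 * r))
  set m := μ.real {z : EuclideanSpace ℝ (Fin n) | ‖z‖ ≤ 2 * r}
  have h4 : μ.real (annu (7 * 2 ^ j * r) (14 * 2 ^ j * r)) * (3/4) ^ (2 ^ j) ≤ q ^ (2 ^ j) := by
    calc μ.real (annu (7 * 2 ^ j * r) (14 * 2 ^ j * r)) * (3/4) ^ (2 ^ j)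
        ≤ μ.real (annu (7 * 2 ^ j * r) (14 * 2 ^ j * r)) * m ^ (2 ^ j - 1) := by
          gcongr
          calc (3/4 : ℝ) ^ (2 ^ j) ≤ (3/4) ^ (2 ^ j - 1) :=
                pow_le_pow_of_le_one (by norm_num) (by norm_num) (Nat.sub_le _ _)
            _ ≤ m ^ (2 ^ j - 1) := by gcongr
      _ ≤ _ := h2.trans (by gcongr)
  have h5 : (4/3 * q) ^ (2 ^ j) * (3/4) ^ (2 ^ j) = q ^ (2 ^ j) := by
    rw [← mul_pow]; congr 1; ring
  have h6 : (0:ℝ) < (3/4) ^ (2 ^ j) := by positivity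
  nlinarith [h4, h5, h6]

lemma borell_tail {n : ℕ} {μ : Measure (EuclideanSpace ℝ (Fin n))} [IsProbabilityMeasure μ]
    (h : PLMeas μ) {r : ℝ} (hr : 0 < r) (hm : 3/4 ≤ μ.real {z | ‖z‖ ≤ 2 * r})
    {x : ℝ} (hx : 4/3 * μ.real (annu (5 * r) (16 * r)) ≤ x) (hx2 : x ≤ 1/2) (J : ℕ) :
    μ.real {z | 7 * 2 ^ J * r ≤ ‖z‖} ≤ 2 * x ^ (2 ^ J) := by
  have hx0 : 0 ≤ x := le_trans (by positivity) hx
  have hsub : {z : EuclideanSpace ℝ (Fin n) | 7 * 2 ^ J * r ≤ ‖z‖} ⊆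
      ⋃ i : ℕ, annu (7 * 2 ^ (J + i) * r) (14 * 2 ^ (J + i) * r) := by
    intro z hz
    have hz : 7 * 2 ^ J * r ≤ ‖z‖ := hz
    obtain ⟨i, hi1, hi2⟩ := exists_nat_pow_near (x := ‖z‖ / (7 * 2 ^ J * r)) (y := (2:ℝ))
      (by rw [le_div_iff₀ (by positivity)]; linarith) (by norm_num)
    rw [le_div_iff₀ (by positivity)] at hi1
    rw [div_lt_iff₀ (by positivity)] at hi2
    refine Set.mem_iUnion.2 ⟨i, ?_, ?_⟩
    · rw [pow_add]; linarith
    · rw [pow_add]; rw [pow_succ] at hi2; linarith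
  have hs : HasSum (fun i : ℕ => x ^ (2 ^ J) * (1/2 : ℝ) ^ i) (2 * x ^ (2 ^ J)) := by
    have := hasSum_geometric_two.mul_left (x ^ (2 ^ J))
    rwa [mul_comm 2]
  have hb : ∀ i : ℕ, μ (annu (7 * 2 ^ (J + i) * r) (14 * 2 ^ (J + i) * r)) ≤
      ENNReal.ofReal (x ^ (2 ^ J) * (1/2 : ℝ) ^ i) := by
    intro i
    rw [← ofReal_measureReal]
    refine ENNReal.ofReal_le_ofReal ((borell_annu h hr hm (J + i)).trans ?_)
    have hle : 2 ^ J + i ≤ 2 ^ (J + i) := by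
      rw [pow_add]
      have a1 := Nat.one_le_two_pow (n := J)
      have a2 : i + 1 ≤ 2 ^ i := Nat.lt_two_pow_self
      nlinarith
    calc (4/3 * μ.real (annu (n := n) (5 * r) (16 * r))) ^ (2 ^ (J + i)) ≤ x ^ (2 ^ (J + i)) := by gcongr
      _ ≤ x ^ (2 ^ J + i) := pow_le_pow_of_le_one hx0 (by linarith) hle
      _ = x ^ (2 ^ J) * x ^ i := pow_add _ _ _
      _ ≤ _ := by gcongr
  refine ENNReal.toReal_le_of_le_ofReal (by positivity) ?_
  calc μ {z | 7 * 2 ^ J * r ≤ ‖z‖} ≤ ∑' i, μ (annu (7 * 2 ^ (J + i) * r) (14 * 2 ^ (J + i) * r)) :=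
        (measure_mono hsub).trans (measure_iUnion_le _)
    _ ≤ ∑' i, ENNReal.ofReal (x ^ (2 ^ J) * (1/2 : ℝ) ^ i) := ENNReal.tsum_le_tsum hb
    _ = ENNReal.ofReal (2 * x ^ (2 ^ J)) := by
        rw [← ENNReal.ofReal_tsum_of_nonneg (fun i => by positivity) hs.summable, hs.tsum_eq]

/-- exponential tail -/
lemma borell_exp {n : ℕ} {μ : Measure (EuclideanSpace ℝ (Fin n))} [IsProbabilityMeasure μ]
    (h : PLMeas μ) {r : ℝ} (hr : 0 < r) (hm : 3/4 ≤ μ.real {z | ‖z‖ ≤ 2 * r})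
    {L : ℝ} (hx : 4/3 * μ.real (annu (5 * r) (16 * r)) ≤ exp (-L)) (hx2 : exp (-L) ≤ 1/2)
    {s : ℝ} (hs : 7 * r ≤ s) :
    μ.real {z | s ≤ ‖z‖} ≤ 2 * exp (-(L * (s / (14 * r)))) := by
  obtain ⟨J, h1, h2⟩ := exists_nat_pow_near (x := s / (7 * r)) (y := (2:ℝ))
      (by rw [le_div_iff₀ (by positivity)]; linarith) (by norm_num)
  rw [le_div_iff₀ (by positivity)] at h1
  rw [div_lt_iff₀ (by positivity)] at h2
  have hL : 0 ≤ L := by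
    have : exp (-L) ≤ exp 0 := by rw [exp_zero]; linarith
    have := exp_le_exp.1 this
    linarith
  calc μ.real {z | s ≤ ‖z‖} ≤ μ.real {z | 7 * 2 ^ J * r ≤ ‖z‖} := by
        refine measureReal_mono ?_
        intro z hz
        have hz : s ≤ ‖z‖ := hz
        show 7 * 2 ^ J * r ≤ ‖z‖
        linarith
    _ ≤ 2 * exp (-L) ^ (2 ^ J) := borell_tail h hr hm hx hx2 J
    _ ≤ _ := by
        rw [← exp_nat_mul]
        gcongr
        push_cast
        have : s / (14 * r) ≤ 2 ^ J := by
          rw [div_le_iff₀ (by positivity)]; rw [pow_succ] at h2; linarith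
        nlinarith

lemma tail_moment {Ω : Type*} [MeasurableSpace Ω] {μ : Measure Ω} [IsProbabilityMeasure μ]
    {f : Ω → ℝ} (hf : Measurable f) (f0 : ∀ x, 0 ≤ f x) {M l p : ℝ} (hM : 0 ≤ M) (hl : 0 < l)
    (hp : 0 < p) (H : ∀ t, 0 < t → μ.real {x | t ≤ f x} ≤ M * exp (-(l * t))) :
    ∫⁻ x, ENNReal.ofReal (f x ^ p) ∂μ ≤ ENNReal.ofReal (M * (p * ((1 / l) ^ p * Gamma p))) := by
  rw [lintegral_rpow_eq_lintegral_meas_le_mul _ (.of_forall f0) hf.aemeasurable hp]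
  have hint : IntegrableOn (fun t : ℝ => t ^ (p - 1) * exp (-(l * t))) (Set.Ioi 0) := by
    have := integrableOn_rpow_mul_exp_neg_mul_rpow (s := p - 1) (p := 1) (b := l) (by linarith) one_pos hl
    simpa using this
  calc ENNReal.ofReal p * ∫⁻ t in Set.Ioi 0, μ {x | t ≤ f x} * ENNReal.ofReal (t ^ (p - 1))
      ≤ ENNReal.ofReal p * ∫⁻ t in Set.Ioi 0, ENNReal.ofReal (M * (t ^ (p - 1) * exp (-(l * t)))) := by
        refine mul_le_mul' le_rfl ?_
        refine setLIntegral_mono' measurableSet_Ioi ?_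
        intro t ht
        have ht : 0 < t := ht
        rw [← ofReal_measureReal, ← ENNReal.ofReal_mul (by positivity)]
        refine ENNReal.ofReal_le_ofReal ?_
        have := H t ht
        have h2 : 0 ≤ t ^ (p - 1) := by positivity
        nlinarith
    _ = _ := by
        rw [← ofReal_integral_eq_lintegral_ofReal (hint.const_mul M), ← ENNReal.ofReal_mul hp.le,
          integral_const_mul, integral_rpow_mul_exp_neg_mul_Ioi hp hl]
        · congr 1; ring
        · refine (ae_restrict_iff' measurableSet_Ioi).2 (.of_forall fun t ht => ?_)
          have ht : 0 < t := ht
          positivity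

lemma PLMeas.restrict {n : ℕ} {μ : Measure (EuclideanSpace ℝ (Fin n))} (h : PLMeas μ)
    {K : Set (EuclideanSpace ℝ (Fin n))} (hK : MeasurableSet K)
    (hc : ∀ x ∈ K, ∀ y ∈ K, (1/2 : ℝ) • (x + y) ∈ K) : PLMeas (μ.restrict K) := by
  intro u v w hu hv hw H
  rw [← lintegral_indicator hK, ← lintegral_indicator hK, ← lintegral_indicator hK]
  refine h _ _ _ (hu.indicator hK) (hv.indicator hK) (hw.indicator hK) ?_
  intro x y
  by_cases hx : x ∈ K
  · by_cases hy : y ∈ K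
    · rw [Set.indicator_of_mem hx, Set.indicator_of_mem hy, Set.indicator_of_mem (hc x hx y hy)]
      exact H x y
    · simp [hy]
  · simp [hx]

/-- the Gaussian average -/
def phiG {n : ℕ} (z w : EuclideanSpace ℝ (Fin n)) (a b : ℝ) : ℝ :=
  ∫ g, exp (-(a - ⟪g, z⟫) ^ 2 / 2 - (b - ⟪g, w⟫) ^ 2 / 2) ∂(stdGaussian (EuclideanSpace ℝ (Fin n)))

lemma lintegral_pi_phiG {n : ℕ} (k : ℕ) (z w : EuclideanSpace ℝ (Fin n)) (a b : ℝ) :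
    ∫⁻ G : Fin k → EuclideanSpace ℝ (Fin n),
      ENNReal.ofReal (exp (-∑ i, (a - ⟪G i, z⟫) ^ 2 / 2)) *
      ENNReal.ofReal (exp (-∑ i, (b - ⟪G i, w⟫) ^ 2 / 2))
      ∂(Measure.pi fun _ => stdGaussian (EuclideanSpace ℝ (Fin n)))
    = ENNReal.ofReal (phiG z w a b ^ k) := by
  have e := integral_fintype_prod_eq_pow (ι := Fin k) (𝕜 := ℝ) (μ := stdGaussian (EuclideanSpace ℝ (Fin n)))
    (fun g => exp (-(a - ⟪g, z⟫) ^ 2 / 2 - (b - ⟪g, w⟫) ^ 2 / 2))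
  simp only [Fintype.card_fin] at e
  unfold phiG
  rw [← e, ofReal_integral_eq_lintegral_ofReal]
  · refine lintegral_congr fun G => ?_
    rw [← ENNReal.ofReal_mul (by positivity), ← exp_add, ← exp_sum, ← Finset.sum_neg_distrib,
      ← Finset.sum_neg_distrib, ← Finset.sum_add_distrib]
    congr 2
    refine Finset.sum_congr rfl fun i _ => by ring
  · refine Integrable.of_bound (C := 1) ?_ ?_
    · refine Measurable.aestronglyMeasurable ?_
      fun_prop
    · refine .of_forall fun G => ?_
      rw [← exp_sum, Real.norm_of_nonneg (by positivity), exp_le_one_iff]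
      refine Finset.sum_nonpos fun i _ => ?_
      nlinarith [sq_nonneg (a - ⟪G i, z⟫), sq_nonneg (b - ⟪G i, w⟫)]
  · exact .of_forall fun G => by positivity

lemma swap_gen {α β : Type*} [MeasurableSpace α] [MeasurableSpace β] (PG : Measure α) [SFinite PG]
    (ν : Measure β) [SFinite ν] (f g : α → β → ℝ≥0∞)
    (mf : Measurable (Function.uncurry f)) (mg : Measurable (Function.uncurry g)) :
    ∫⁻ z, ∫⁻ w, ∫⁻ G, f G z * g G w ∂PG ∂ν ∂ν = ∫⁻ G, (∫⁻ z, f G z ∂ν) * (∫⁻ w, g G w ∂ν) ∂PG := by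
  have e2 : ∀ z, ∫⁻ w, ∫⁻ G, f G z * g G w ∂PG ∂ν = ∫⁻ G, f G z * ∫⁻ w, g G w ∂ν ∂PG := by
    intro z
    rw [lintegral_lintegral_swap]
    · refine lintegral_congr fun G => ?_
      rw [lintegral_const_mul]
      exact mg.of_uncurry_left
    · refine Measurable.aemeasurable ?_
      exact (mf.comp (measurable_snd.prodMk measurable_const)).mul
        (mg.comp (measurable_snd.prodMk measurable_fst))
  simp_rw [e2]
  rw [lintegral_lintegral_swap]
  · refine lintegral_congr fun G => ?_
    rw [lintegral_mul_const]
    exact mf.of_uncurry_left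
  · refine Measurable.aemeasurable ?_
    refine (mf.comp (measurable_snd.prodMk measurable_fst)).mul ?_
    exact mg.lintegral_prod_right'.comp measurable_snd

lemma pair_ineq {n : ℕ} {ν : Measure (EuclideanSpace ℝ (Fin n))} [SFinite ν] (h : PLMeas ν)
    (k : ℕ) (a b : ℝ) :
    ∫⁻ z, ∫⁻ w, ENNReal.ofReal (phiG z w a b ^ k) ∂ν ∂ν ≤
    ∫⁻ z, ∫⁻ w, ENNReal.ofReal (phiG z w ((a + b) / 2) ((a + b) / 2) ^ k) ∂ν ∂ν := by
  have mF : ∀ a : ℝ, Measurable (Function.uncurry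
      fun (G : Fin k → EuclideanSpace ℝ (Fin n)) (z : EuclideanSpace ℝ (Fin n)) =>
      ENNReal.ofReal (exp (-∑ i, (a - ⟪G i, z⟫) ^ 2 / 2))) := by
    intro a
    unfold Function.uncurry
    fun_prop
  have key : ∀ a b : ℝ, ∫⁻ z, ∫⁻ w, ENNReal.ofReal (phiG z w a b ^ k) ∂ν ∂ν
      = ∫⁻ G : Fin k → EuclideanSpace ℝ (Fin n),
        (∫⁻ z, ENNReal.ofReal (exp (-∑ i, (a - ⟪G i, z⟫) ^ 2 / 2)) ∂ν) *
        (∫⁻ w, ENNReal.ofReal (exp (-∑ i, (b - ⟪G i, w⟫) ^ 2 / 2)) ∂ν)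
        ∂(Measure.pi fun _ => stdGaussian (EuclideanSpace ℝ (Fin n))) := by
    intro a b
    simp_rw [← lintegral_pi_phiG]
    exact swap_gen _ _ _ _ (mF a) (mF b)
  rw [key, key]
  refine lintegral_mono fun G => ?_
  rw [← sq]
  refine h _ _ _ (mF a).of_uncurry_left (mF b).of_uncurry_left (mF _).of_uncurry_left ?_
  intro x y
  rw [← ENNReal.ofReal_mul (by positivity), ← ENNReal.ofReal_pow (by positivity), ← exp_add,
    ← exp_nat_mul]
  refine ENNReal.ofReal_le_ofReal (exp_le_exp.2 ?_)
  have : ∑ i, 2 * (((a + b) / 2 - ⟪G i, (1/2:ℝ) • (x + y)⟫) ^ 2 / 2)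
      ≤ ∑ i, ((a - ⟪G i, x⟫) ^ 2 / 2 + (b - ⟪G i, y⟫) ^ 2 / 2) := by
    refine Finset.sum_le_sum fun i _ => ?_
    rw [inner_smul_right, inner_add_right]
    nlinarith [sq_nonneg ((a - ⟪G i, x⟫) - (b - ⟪G i, y⟫))]
  rw [← Finset.mul_sum, Finset.sum_add_distrib] at this
  push_cast
  linarith

lemma gauss1 {v : ℝ} (hv : 0 < v) (c d : ℂ) :
    ∫ x : ℝ, Complex.exp (-((v - 1) / 2 : ℝ) * (x : ℂ) ^ 2 + c * x + d) ∂(gaussianReal 0 1)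
      = ((√v)⁻¹ : ℝ) * Complex.exp (d + c ^ 2 / (2 * v)) := by
  rw [integral_gaussianReal_eq_integral_smul one_ne_zero]
  have e : ∀ x : ℝ, gaussianPDFReal 0 1 x •
      Complex.exp (-((v - 1) / 2 : ℝ) * (x : ℂ) ^ 2 + c * x + d)
      = ((√(2 * π))⁻¹ : ℝ) * Complex.exp ((-(v / 2) : ℝ) * (x : ℂ) ^ 2 + c * x + d) := by
    intro x
    rw [gaussianPDFReal, Complex.real_smul]
    push_cast
    rw [mul_assoc, ← Complex.exp_add]
    simp
    left
    congr 1
    ring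
  simp_rw [e]
  rw [integral_const_mul, integral_cexp_quadratic (by simp; positivity)]
  have e2 : ((π : ℂ) / -((-(v / 2) : ℝ) : ℂ)) ^ (1 / 2 : ℂ) = ((√(2 * π) * (√v)⁻¹ : ℝ) : ℂ) := by
    have : √(2 * π) * (√v)⁻¹ = (2 * π / v) ^ (1 / 2 : ℝ) := by
      rw [← Real.sqrt_eq_rpow, Real.sqrt_div (by positivity)]; rfl
    rw [this, Complex.ofReal_cpow (by positivity)]
    push_cast
    congr 1
    field_simp
  rw [e2]
  have e3 : d - c ^ 2 / (4 * ((-(v / 2) : ℝ) : ℂ)) = d + c ^ 2 / (2 * v) := by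
    push_cast
    have : (v : ℂ) ≠ 0 := by exact_mod_cast hv.ne'
    field_simp
    ring
  rw [e3]
  push_cast
  have : (√(2 * π) : ℂ) ≠ 0 := by
    have : √(2 * π) ≠ 0 := by positivity
    exact_mod_cast this
  field_simp

lemma gauss_fourier (u : ℝ) :
    ∫ x : ℝ, Complex.exp (u * x * Complex.I) ∂(gaussianReal 0 1) = Complex.exp (-u ^ 2 / 2) := by
  have := charFun_gaussianReal (μ := 0) (v := 1) u
  rw [charFun_apply_real] at this
  rw [this]
  congr 1
  simp
  ring

lemma phiG_fourier {n : ℕ} (z w : EuclideanSpace ℝ (Fin n)) (a b : ℝ) :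
    ((phiG z w a b : ℝ) : ℂ) = ∫ x : ℝ, ∫ y : ℝ,
      Complex.exp (((x * a + y * b : ℝ) : ℂ) * Complex.I - ((‖x • z + y • w‖ ^ 2 / 2 : ℝ) : ℂ))
      ∂(gaussianReal 0 1) ∂(gaussianReal 0 1) := by
  set N := gaussianReal 0 1
  set S := stdGaussian (EuclideanSpace ℝ (Fin n))
  have hI : ∀ g : EuclideanSpace ℝ (Fin n),
      ((exp (-(a - ⟪g, z⟫) ^ 2 / 2 - (b - ⟪g, w⟫) ^ 2 / 2) : ℝ) : ℂ)
      = ∫ p : ℝ × ℝ, Complex.exp (((p.1 * (a - ⟪g, z⟫) + p.2 * (b - ⟪g, w⟫) : ℝ) : ℂ) * Complex.I)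
        ∂(N.prod N) := by
    intro g
    have h1 := gauss_fourier (a - ⟪g, z⟫)
    have h2 := gauss_fourier (b - ⟪g, w⟫)
    have h3 := integral_prod_mul (μ := N) (ν := N)
      (fun x : ℝ => Complex.exp (((a - ⟪g, z⟫ : ℝ) : ℂ) * x * Complex.I))
      (fun x : ℝ => Complex.exp (((b - ⟪g, w⟫ : ℝ) : ℂ) * x * Complex.I))
    rw [h1, h2, ← Complex.exp_add] at h3
    push_cast at h3 ⊢
    rw [show -((a:ℂ) - (⟪g, z⟫ : ℝ)) ^ 2 / 2 - ((b:ℂ) - (⟪g, w⟫ : ℝ)) ^ 2 / 2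
      = -((a:ℂ) - (⟪g, z⟫ : ℝ)) ^ 2 / 2 + -((b:ℂ) - (⟪g, w⟫ : ℝ)) ^ 2 / 2 by ring, ← h3]
    refine integral_congr_ae (.of_forall fun p => ?_)
    simp only
    rw [← Complex.exp_add]
    congr 1
    ring
  unfold phiG
  rw [← integral_complex_ofReal]
  simp_rw [hI]
  rw [integral_integral_swap]
  swap
  · refine Integrable.of_bound (C := 1) ?_ (.of_forall fun q => ?_)
    · refine Continuous.aestronglyMeasurable ?_
      unfold Function.uncurry
      fun_prop
    · unfold Function.uncurry
      rw [Complex.norm_exp_ofReal_mul_I]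
  have hJ : ∀ p : ℝ × ℝ, ∫ g, Complex.exp (((p.1 * (a - ⟪g, z⟫) + p.2 * (b - ⟪g, w⟫) : ℝ) : ℂ)
      * Complex.I) ∂S = Complex.exp (((p.1 * a + p.2 * b : ℝ) : ℂ) * Complex.I
        - ((‖p.1 • z + p.2 • w‖ ^ 2 / 2 : ℝ) : ℂ)) := by
    intro p
    have h1 := charFun_stdGaussian (E := EuclideanSpace ℝ (Fin n)) (-(p.1 • z + p.2 • w))
    rw [charFun_apply] at h1
    rw [sub_eq_add_neg, Complex.exp_add]
    have h2 : Complex.exp (-((‖p.1 • z + p.2 • w‖ ^ 2 / 2 : ℝ) : ℂ))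
        = ∫ x, Complex.exp ((⟪x, -(p.1 • z + p.2 • w)⟫ : ℝ) * Complex.I) ∂S := by
      rw [h1, norm_neg]; push_cast; congr 1; ring
    rw [h2, ← integral_const_mul]
    refine integral_congr_ae (.of_forall fun g => ?_)
    simp only
    rw [← Complex.exp_add]
    congr 1
    rw [inner_neg_right, inner_add_right, inner_smul_right, inner_smul_right]
    push_cast
    ring
  rw [integral_congr_ae (.of_forall hJ)]
  rw [integral_prod]
  refine Integrable.of_bound (C := 1) ?_ (.of_forall fun q => ?_)
  · refine Continuous.aestronglyMeasurable ?_
    fun_prop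
  · rw [Complex.norm_exp, Real.exp_le_one_iff, Complex.sub_re, Complex.re_ofReal_mul, Complex.I_re,
      Complex.ofReal_re]
    have : 0 ≤ ‖q.1 • z + q.2 • w‖ ^ 2 / 2 := by positivity
    linarith

lemma phiG_eq {n : ℕ} (z w : EuclideanSpace ℝ (Fin n)) (a b : ℝ) :
    phiG z w a b = (√((1 + ‖z‖ ^ 2) * (1 + ‖w‖ ^ 2) - ⟪z, w⟫ ^ 2))⁻¹ *
      exp (-(a ^ 2 * (1 + ‖w‖ ^ 2) + b ^ 2 * (1 + ‖z‖ ^ 2) - 2 * a * b * ⟪z, w⟫) /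
        (2 * ((1 + ‖z‖ ^ 2) * (1 + ‖w‖ ^ 2) - ⟪z, w⟫ ^ 2))) := by
  set c := ⟪z, w⟫ with hc
  set v := 1 + ‖z‖ ^ 2 with hv
  set v' := 1 + ‖w‖ ^ 2 with hv'
  set D := v * v' - c ^ 2 with hD
  have v'0 : 0 < v' := by positivity
  have hc2 : c ^ 2 ≤ ‖z‖ ^ 2 * ‖w‖ ^ 2 := by
    rw [← mul_pow]; exact sq_le_sq' (by linarith [neg_le_of_abs_le (abs_real_inner_le_norm z w)])
      (real_inner_le_norm z w)
  have D0 : 0 < D := by nlinarith [sq_nonneg ‖z‖, sq_nonneg ‖w‖]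
  have v'c : (v' : ℂ) ≠ 0 := by exact_mod_cast v'0.ne'
  have Dc : (D : ℂ) ≠ 0 := by exact_mod_cast D0.ne'
  have h := phiG_fourier z w a b
  have e1 : ∀ x y : ℝ, Complex.exp (((x * a + y * b : ℝ) : ℂ) * Complex.I -
      ((‖x • z + y • w‖ ^ 2 / 2 : ℝ) : ℂ)) =
      Complex.exp (-((v' - 1) / 2 : ℝ) * (y : ℂ) ^ 2 + (b * Complex.I - c * x) * y
        + (x * a * Complex.I - ‖z‖ ^ 2 * x ^ 2 / 2)) := by
    intro x y
    congr 1
    rw [norm_add_sq_real, norm_smul, norm_smul, inner_smul_left, inner_smul_right, ← hc, hv',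
      mul_pow, mul_pow]
    simp only [Real.norm_eq_abs, sq_abs]
    push_cast
    simp
    ring
  simp_rw [e1, gauss1 v'0] at h
  have e2 : ∀ x : ℝ, Complex.exp ((x * a * Complex.I - ‖z‖ ^ 2 * x ^ 2 / 2) +
      (b * Complex.I - c * x) ^ 2 / (2 * v')) =
      Complex.exp (-((D / v' - 1) / 2 : ℝ) * (x : ℂ) ^ 2 + ((a - b * c / v') * Complex.I) * x
        + (-b ^ 2 / (2 * v'))) := by
    intro x
    congr 1
    have : (D : ℂ) = (1 + ‖z‖ ^ 2) * v' - c ^ 2 := by rw [hD, hv]; push_cast; ring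
    push_cast
    rw [this]
    field_simp
    ring_nf
    rw [Complex.I_sq]
    ring
  simp_rw [e2] at h
  rw [integral_const_mul, gauss1 (by positivity : 0 < D / v')] at h
  have e3 : ((-b ^ 2 / (2 * v')) + ((a - b * c / v') * Complex.I) ^ 2 / (2 * ((D / v' : ℝ) : ℂ)) : ℂ)
      = ((-(a ^ 2 * v' + b ^ 2 * v - 2 * a * b * c) / (2 * D) : ℝ) : ℂ) := by
    push_cast
    rw [mul_pow, Complex.I_sq]
    field_simp
    rw [hD]
    push_cast
    ring
  rw [e3, ← mul_assoc, ← Complex.ofReal_exp, ← Complex.ofReal_mul, ← Complex.ofReal_mul] at h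
  rw [Complex.ofReal_injective h]
  congr 1
  rw [← mul_inv, ← Real.sqrt_mul v'0.le]
  congr 2
  field_simp

/-- the lifted norm -/
def Vn {n : ℕ} (z : EuclideanSpace ℝ (Fin n)) : ℝ := √(1 + ‖z‖ ^ 2)

lemma Vn_sq {n : ℕ} (z : EuclideanSpace ℝ (Fin n)) : Vn z ^ 2 = 1 + ‖z‖ ^ 2 :=
  Real.sq_sqrt (by positivity)

lemma Vn_pos {n : ℕ} (z : EuclideanSpace ℝ (Fin n)) : 0 < Vn z := Real.sqrt_pos.2 (by positivity)

lemma one_le_Vn {n : ℕ} (z : EuclideanSpace ℝ (Fin n)) : 1 ≤ Vn z := by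
  have := Vn_sq z
  nlinarith [Vn_pos z, sq_nonneg ‖z‖]

lemma measurable_Vn {n : ℕ} : Measurable (Vn (n := n)) := by
  unfold Vn; fun_prop

lemma Vn_inner {n : ℕ} (z w : EuclideanSpace ℝ (Fin n)) : 1 + |⟪z, w⟫| ≤ Vn z * Vn w := by
  have h1 := abs_real_inner_le_norm z w
  have h2 : (1 + ‖z‖ * ‖w‖) ^ 2 ≤ (Vn z * Vn w) ^ 2 := by
    rw [mul_pow, Vn_sq, Vn_sq]
    nlinarith [sq_nonneg (‖z‖ - ‖w‖)]
  have := Vn_pos z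
  have := Vn_pos w
  have h3 := abs_le_of_sq_le_sq h2 (by positivity)
  have h4 := le_abs_self (1 + ‖z‖ * ‖w‖)
  linarith

lemma phi_upper {n : ℕ} (z w : EuclideanSpace ℝ (Fin n)) {m : ℝ} (hm : 0 < m) :
    phiG z w m m ≤ exp (|⟪z, w⟫| - 1) / m ^ 2 := by
  rw [phiG_eq, ← Vn_sq, ← Vn_sq]
  have hs := Vn_inner z w
  set V := Vn z
  set W := Vn w
  set c := ⟪z, w⟫
  set g := V * W + |c| with hg
  set d := V * W - |c| with hd
  have hd1 : 1 ≤ d := by linarith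
  have hg1 : 1 ≤ g := by linarith [abs_nonneg c]
  have eD : V ^ 2 * W ^ 2 - c ^ 2 = g * d := by rw [hg, hd, ← sq_abs c]; ring
  rw [eD]
  have h1 : (√(g * d))⁻¹ ≤ exp |c| / g := by
    have h2 : g ≤ exp |c| * √(g * d) := by
      have h3 : g ^ 2 ≤ (exp |c| * √(g * d)) ^ 2 := by
        rw [mul_pow, Real.sq_sqrt (by positivity), ← exp_nat_mul]
        have h4 := add_one_le_exp (((2:ℕ):ℝ) * |c|)
        have h5 : g ≤ (((2:ℕ):ℝ) * |c| + 1) * d := by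
          push_cast
          nlinarith [abs_nonneg c]
        have h6 : (((2:ℕ):ℝ) * |c| + 1) * d ≤ exp (((2:ℕ):ℝ) * |c|) * d := by gcongr
        nlinarith
      exact (le_abs_self g).trans (abs_le_of_sq_le_sq h3 (by positivity))
    rw [inv_le_iff_one_le_mul₀ (by positivity), div_mul_eq_mul_div, le_div_iff₀ (by positivity)]
    linarith
  have h2 : -(m ^ 2 * W ^ 2 + m ^ 2 * V ^ 2 - 2 * m * m * c) / (2 * (g * d)) ≤ -(m ^ 2 / g) := by
    rw [← neg_div, div_le_div_iff₀ (by positivity) (by positivity)]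
    have : 2 * d ≤ W ^ 2 + V ^ 2 - 2 * c := by
      rw [hd]; nlinarith [sq_nonneg (V - W), le_abs_self c]
    have h7 : (2 * d) * (m ^ 2 * g) ≤ (W ^ 2 + V ^ 2 - 2 * c) * (m ^ 2 * g) := by gcongr
    nlinarith
  have h3 : m ^ 2 / g * exp (-(m ^ 2 / g)) ≤ exp (-1) := by
    have := add_one_le_exp (m ^ 2 / g - 1)
    calc m ^ 2 / g * exp (-(m ^ 2 / g)) ≤ exp (m ^ 2 / g - 1) * exp (-(m ^ 2 / g)) := by
          gcongr; linarith
      _ = exp (-1) := by rw [← exp_add]; congr 1; ring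
  calc (√(g * d))⁻¹ * exp (-(m ^ 2 * W ^ 2 + m ^ 2 * V ^ 2 - 2 * m * m * c) / (2 * (g * d)))
      ≤ exp |c| / g * exp (-(m ^ 2 / g)) := by gcongr
    _ = exp |c| * (m ^ 2 / g * exp (-(m ^ 2 / g))) / m ^ 2 := by field_simp
    _ ≤ exp |c| * exp (-1) / m ^ 2 := by gcongr
    _ = _ := by rw [← exp_add]; rfl

lemma one_dim_lower {a V τ : ℝ} (ha : 1/2 ≤ a) (h1 : a ≤ V) (h2 : V ≤ a + τ) :
    exp (-(1/2) - 6 * τ ^ 2) / a ≤ V⁻¹ * exp (-(a ^ 2 / (2 * V ^ 2))) := by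
  have a0 : 0 < a := by linarith
  have V0 : 0 < V := by linarith
  have hl := one_sub_inv_le_log_of_pos (show 0 < a / V by positivity)
  have hb : (V - a) ^ 2 ≤ τ ^ 2 := by
    apply pow_le_pow_left₀ <;> linarith
  have key : -(1/2) - 6 * τ ^ 2 ≤ log (a / V) - a ^ 2 / (2 * V ^ 2) := by
    have : -(1/2) - 6 * τ ^ 2 ≤ 1 - (a / V)⁻¹ - a ^ 2 / (2 * V ^ 2) := by
      have e : 1 - (a / V)⁻¹ - a ^ 2 / (2 * V ^ 2) + 1/2
          = - ((V - a) ^ 2 * ((a + 2 * V) / (2 * a * V ^ 2))) := by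
        field_simp; ring
      have h5 : (a + 2 * V) / (2 * a * V ^ 2) ≤ 6 := by
        rw [div_le_iff₀ (by positivity)]
        have : 1/4 ≤ a * V := by nlinarith
        nlinarith
      have h6 : (V - a) ^ 2 * ((a + 2 * V) / (2 * a * V ^ 2)) ≤ τ ^ 2 * 6 := by
        gcongr
      linarith
    linarith
  calc exp (-(1/2) - 6 * τ ^ 2) / a ≤ exp (log (a / V) - a ^ 2 / (2 * V ^ 2)) / a := by gcongr
    _ = _ := by
      rw [sub_eq_add_neg, exp_add, exp_log (by positivity)]; field_simp

lemma phi_lower {n : ℕ} (z w : EuclideanSpace ℝ (Fin n)) {a b τ : ℝ} (ha : 1/2 ≤ a) (hb : 1/2 ≤ b)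
    (h1 : a ≤ Vn z) (h2 : Vn z ≤ a + τ) (h3 : b ≤ Vn w) (h4 : Vn w ≤ b + τ) :
    exp (-1 - 12 * τ ^ 2 - 2 * |⟪z, w⟫|) / (a * b) ≤ phiG z w a b := by
  rw [phiG_eq, ← Vn_sq, ← Vn_sq]
  have hs := Vn_inner z w
  have k1 := one_dim_lower ha h1 h2
  have k2 := one_dim_lower hb h3 h4
  have V0 := Vn_pos z
  have W0 := Vn_pos w
  set V := Vn z
  set W := Vn w
  set c := ⟪z, w⟫
  have c0 := abs_nonneg c
  have a0 : 0 < a := by linarith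
  have b0 : 0 < b := by linarith
  set D := V ^ 2 * W ^ 2 - c ^ 2 with hD
  have hDV : V * W ≤ D := by
    rw [hD, ← sq_abs c]; nlinarith
  have D0 : 0 < D := lt_of_lt_of_le (by positivity) hDV
  have g1 : V⁻¹ * W⁻¹ ≤ (√D)⁻¹ := by
    rw [← mul_inv]
    apply inv_anti₀ (by positivity)
    apply Real.sqrt_le_iff.2 ⟨by positivity, ?_⟩
    rw [hD]; nlinarith [sq_nonneg c]
  have g2 : -(a ^ 2 / (2 * V ^ 2)) - b ^ 2 / (2 * W ^ 2) - 2 * |c| ≤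
      -(a ^ 2 * W ^ 2 + b ^ 2 * V ^ 2 - 2 * a * b * c) / (2 * D) := by
    have hA : a ^ 2 * W ^ 2 + b ^ 2 * V ^ 2 ≤ 2 * (V ^ 2 * W ^ 2) := by
      have : a ^ 2 ≤ V ^ 2 := by gcongr
      have : b ^ 2 ≤ W ^ 2 := by gcongr
      nlinarith [sq_nonneg V, sq_nonneg W]
    have e : (a ^ 2 * W ^ 2 + b ^ 2 * V ^ 2) / (2 * D) =
        a ^ 2 / (2 * V ^ 2) + b ^ 2 / (2 * W ^ 2)
        + (a ^ 2 * W ^ 2 + b ^ 2 * V ^ 2) / (2 * (V ^ 2 * W ^ 2)) * (c ^ 2 / D) := by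
      have : c ^ 2 = V ^ 2 * W ^ 2 - D := by rw [hD]; ring
      rw [this]
      field_simp
      ring
    have q1 : (a ^ 2 * W ^ 2 + b ^ 2 * V ^ 2) / (2 * (V ^ 2 * W ^ 2)) ≤ 1 := by
      rw [div_le_one (by positivity)]; exact hA
    have q2 : c ^ 2 / D ≤ |c| := by
      rw [div_le_iff₀ D0, ← sq_abs]; nlinarith
    have q3 : (a ^ 2 * W ^ 2 + b ^ 2 * V ^ 2) / (2 * (V ^ 2 * W ^ 2)) * (c ^ 2 / D) ≤ 1 * |c| := by
      gcongr
    have q4 : -|c| ≤ 2 * a * b * c / (2 * D) := by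
      rw [le_div_iff₀ (by positivity)]
      have : a * b ≤ D := le_trans (by gcongr) hDV
      have : a * b * (-c) ≤ a * b * |c| := by gcongr; exact neg_le_abs c
      nlinarith
    have e2 : -(a ^ 2 * W ^ 2 + b ^ 2 * V ^ 2 - 2 * a * b * c) / (2 * D)
        = -((a ^ 2 * W ^ 2 + b ^ 2 * V ^ 2) / (2 * D)) + 2 * a * b * c / (2 * D) := by ring
    rw [e2, e]
    linarith
  calc exp (-1 - 12 * τ ^ 2 - 2 * |c|) / (a * b)
      = (exp (-(1/2) - 6 * τ ^ 2) / a) * (exp (-(1/2) - 6 * τ ^ 2) / b) * exp (-(2 * |c|)) := by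
        rw [div_mul_div_comm, ← exp_add, div_mul_eq_mul_div, ← exp_add]; congr 2; ring
    _ ≤ (V⁻¹ * exp (-(a ^ 2 / (2 * V ^ 2)))) * (W⁻¹ * exp (-(b ^ 2 / (2 * W ^ 2)))) * exp (-(2 * |c|)) := by
        gcongr
    _ = V⁻¹ * W⁻¹ * exp (-(a ^ 2 / (2 * V ^ 2)) - b ^ 2 / (2 * W ^ 2) - 2 * |c|) := by
        rw [sub_eq_add_neg, sub_eq_add_neg, exp_add, exp_add]; ring
    _ ≤ _ := by gcongr

lemma exp_c_bound {n : ℕ} {ν : Measure (EuclideanSpace ℝ (Fin n))} [IsFiniteMeasure ν]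
    (hν : ν Set.univ ≤ 1) {τ : ℝ} (hτ : 0 < τ) {k : ℕ} (hk : 1/2 ≤ k * τ ^ 2)
    (hQ : ∀ η, τ ^ 2 ≤ η → (ν.prod ν) {p | η ≤ |⟪p.1, p.2⟫|} ≤ ENNReal.ofReal (exp (-(4 * k * η)))) :
    ∫⁻ p, ENNReal.ofReal (exp (k * |⟪p.1, p.2⟫|)) ∂(ν.prod ν) ≤ ENNReal.ofReal (2 * exp (k * τ ^ 2)) := by
  set x := k * τ ^ 2 with hx
  have mset : ∀ j : ℕ, MeasurableSet {p : EuclideanSpace ℝ (Fin n) × EuclideanSpace ℝ (Fin n) |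
      ((j:ℝ) + 1) * τ ^ 2 ≤ |⟪p.1, p.2⟫|} := by
    intro j
    refine measurableSet_le measurable_const ?_
    fun_prop
  have hpt : ∀ p : EuclideanSpace ℝ (Fin n) × EuclideanSpace ℝ (Fin n),
      ENNReal.ofReal (exp (k * |⟪p.1, p.2⟫|)) ≤ ENNReal.ofReal (exp x) +
        ∑' j : ℕ, {p : EuclideanSpace ℝ (Fin n) × EuclideanSpace ℝ (Fin n) |
          ((j:ℝ) + 1) * τ ^ 2 ≤ |⟪p.1, p.2⟫|}.indicator
          (fun _ => ENNReal.ofReal (exp ((j + 2) * x))) p := by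
    intro p
    set c := |⟪p.1, p.2⟫| with hc
    have hc0 : 0 ≤ c := abs_nonneg _
    rcases le_or_gt c (τ ^ 2) with h | h
    · refine le_add_right (ENNReal.ofReal_le_ofReal (exp_le_exp.2 ?_))
      rw [hx]; gcongr
    · set N := ⌊c / τ ^ 2⌋₊ with hN
      have h1 : (N : ℝ) ≤ c / τ ^ 2 := Nat.floor_le (by positivity)
      have h2 : c / τ ^ 2 < N + 1 := Nat.lt_floor_add_one _
      have h3 : 1 ≤ N := Nat.le_floor (by rw [le_div_iff₀ (by positivity)]; push_cast; linarith)
      obtain ⟨j, hj⟩ : ∃ j, N = j + 1 := ⟨N - 1, by omega⟩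
      refine le_add_left (le_trans ?_ (ENNReal.le_tsum j))
      rw [hj] at h1 h2
      push_cast at h1 h2
      rw [le_div_iff₀ (by positivity)] at h1
      rw [div_lt_iff₀ (by positivity)] at h2
      rw [Set.indicator_of_mem (by exact h1)]
      refine ENNReal.ofReal_le_ofReal (exp_le_exp.2 ?_)
      rw [hx]
      have : (k:ℝ) * c ≤ k * (((j:ℝ) + 1 + 1) * τ ^ 2) := by gcongr
      linarith
  have hs : HasSum (fun j : ℕ => exp (-(2 * x)) * exp (-(3 * x)) ^ j) (exp (-(2 * x)) * (1 - exp (-(3 * x)))⁻¹) := by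
    refine (hasSum_geometric_of_lt_one (by positivity) ?_).mul_left _
    rw [exp_lt_one_iff]; linarith
  calc ∫⁻ p, ENNReal.ofReal (exp (k * |⟪p.1, p.2⟫|)) ∂(ν.prod ν)
      ≤ ∫⁻ p, (ENNReal.ofReal (exp x) +
        ∑' j : ℕ, {p : EuclideanSpace ℝ (Fin n) × EuclideanSpace ℝ (Fin n) |
          ((j:ℝ) + 1) * τ ^ 2 ≤ |⟪p.1, p.2⟫|}.indicator
          (fun _ => ENNReal.ofReal (exp ((j + 2) * x))) p) ∂(ν.prod ν) := lintegral_mono hpt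
    _ = ENNReal.ofReal (exp x) * (ν.prod ν) Set.univ + ∑' j : ℕ, ENNReal.ofReal (exp ((j + 2) * x)) *
          (ν.prod ν) {p | ((j:ℝ) + 1) * τ ^ 2 ≤ |⟪p.1, p.2⟫|} := by
        rw [lintegral_add_left measurable_const, lintegral_const, lintegral_tsum]
        · congr 2
          ext j
          rw [lintegral_indicator (mset j), setLIntegral_const]
        · intro j
          exact (measurable_const.indicator (mset j)).aemeasurable
    _ ≤ ENNReal.ofReal (exp x) * 1 + ∑' j : ℕ, ENNReal.ofReal (exp (-(2 * x)) * exp (-(3 * x)) ^ j) := by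
        gcongr with j
        · rw [← Set.univ_prod_univ, Measure.prod_prod]
          exact mul_le_one' hν hν
        · refine (mul_le_mul' le_rfl (hQ _ ?_)).trans ?_
          · have : (0:ℝ) ≤ j * τ ^ 2 := by positivity
            linarith
          · rw [← ENNReal.ofReal_mul (by positivity), ← exp_add, ← exp_nat_mul, ← exp_add]
            refine ENNReal.ofReal_le_ofReal (exp_le_exp.2 ?_)
            rw [hx]; apply le_of_eq; ring
    _ ≤ _ := by
        rw [← ENNReal.ofReal_tsum_of_nonneg (fun i => by positivity) hs.summable, hs.tsum_eq, mul_one,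
          ← ENNReal.ofReal_add (by positivity)]
        · refine ENNReal.ofReal_le_ofReal ?_
          have h1 : exp (-(3 * x)) ≤ 1/2 := by
            have h2 : 3/2 + 1 ≤ exp (3 * x) := by linarith [add_one_le_exp (3 * x)]
            rw [exp_neg, inv_le_comm₀ (by positivity) (by norm_num)]
            linarith
          have h3 : (1 - exp (-(3 * x)))⁻¹ ≤ 2 := by
            rw [inv_le_comm₀ (by linarith) (by norm_num)]; linarith
          have h4 : exp (-(2 * x)) ≤ 1/2 := by
            have h2 : 1 + 1 ≤ exp (2 * x) := by linarith [add_one_le_exp (2 * x)]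
            rw [exp_neg, inv_le_comm₀ (by positivity) (by norm_num)]
            linarith
          have h5 : 1 ≤ exp x := one_le_exp (by linarith)
          have h6 : exp (-(2 * x)) * (1 - exp (-(3 * x)))⁻¹ ≤ 1/2 * 2 := by
            gcongr
            exact inv_nonneg.2 (by linarith)
          linarith
        · have : exp (-(3 * x)) < 1 := by rw [exp_lt_one_iff]; linarith
          have : 0 < 1 - exp (-(3 * x)) := by linarith
          positivity

/-- shell -/
def shell {n : ℕ} (a τ : ℝ) : Set (EuclideanSpace ℝ (Fin n)) := {z | a ≤ Vn z ∧ Vn z < a + τ}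

lemma measurableSet_shell {n : ℕ} (a τ : ℝ) : MeasurableSet (shell (n := n) a τ) :=
  (measurableSet_le measurable_const measurable_Vn).inter
    (measurableSet_lt measurable_Vn measurable_const)

lemma measurable_phiG {n : ℕ} (a b : ℝ) :
    Measurable fun p : EuclideanSpace ℝ (Fin n) × EuclideanSpace ℝ (Fin n) => phiG p.1 p.2 a b := by
  simp_rw [phiG_eq]
  fun_prop

lemma shell_pair {n : ℕ} {ν : Measure (EuclideanSpace ℝ (Fin n))} [IsFiniteMeasure ν]
    (hPL : PLMeas ν)
    (hν : ν Set.univ ≤ 1) {τ : ℝ} (hτ : 0 < τ) {k : ℕ} (hk : 1/2 ≤ k * τ ^ 2)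
    (hQ : ∀ η, τ ^ 2 ≤ η → (ν.prod ν) {p | η ≤ |⟪p.1, p.2⟫|} ≤ ENNReal.ofReal (exp (-(4 * k * η))))
    {a b η : ℝ} (ha : 1/2 ≤ a) (hb : 1/2 ≤ b) (hη : τ ^ 2 ≤ η) :
    ν.real (shell a τ) * ν.real (shell b τ) ≤ exp (-(4 * k * η)) +
      2 * exp (k * (13 * τ ^ 2 + 2 * η - ((a - b) / (a + b)) ^ 2)) := by
  have a0 : 0 < a := by linarith
  have b0 : 0 < b := by linarith
  set m := (a + b) / 2 with hm
  have m0 : 0 < m := by positivity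
  set T : Set (EuclideanSpace ℝ (Fin n) × EuclideanSpace ℝ (Fin n)) :=
    (shell a τ ×ˢ shell b τ) ∩ {p | |⟪p.1, p.2⟫| ≤ η} with hT
  have mT : MeasurableSet T := by
    refine ((measurableSet_shell a τ).prod (measurableSet_shell b τ)).inter ?_
    refine measurableSet_le ?_ measurable_const
    fun_prop
  set l := exp (-1 - 12 * τ ^ 2 - 2 * η) / (a * b) with hl
  have l0 : 0 < l := by positivity
  have step : ENNReal.ofReal (l ^ k) * (ν.prod ν) T ≤
      ENNReal.ofReal ((exp (-1) / m ^ 2) ^ k * (2 * exp (k * τ ^ 2))) := by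
    calc ENNReal.ofReal (l ^ k) * (ν.prod ν) T
        = ∫⁻ p in T, ENNReal.ofReal (l ^ k) ∂(ν.prod ν) := by rw [setLIntegral_const]
      _ ≤ ∫⁻ p in T, ENNReal.ofReal (phiG p.1 p.2 a b ^ k) ∂(ν.prod ν) := by
          refine setLIntegral_mono' mT ?_
          rintro p ⟨⟨⟨h1, h2⟩, h3, h4⟩, h5⟩
          have h5 : |⟪p.1, p.2⟫| ≤ η := h5
          refine ENNReal.ofReal_le_ofReal ?_
          gcongr
          refine le_trans ?_ (phi_lower p.1 p.2 ha hb h1 h2.le h3 h4.le)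
          rw [hl]
          gcongr
      _ ≤ ∫⁻ p, ENNReal.ofReal (phiG p.1 p.2 a b ^ k) ∂(ν.prod ν) := setLIntegral_le_lintegral _ _
      _ = ∫⁻ z, ∫⁻ w, ENNReal.ofReal (phiG z w a b ^ k) ∂ν ∂ν := by
          rw [lintegral_prod]
          exact ((measurable_phiG a b).pow_const k).ennreal_ofReal.aemeasurable
      _ ≤ ∫⁻ z, ∫⁻ w, ENNReal.ofReal (phiG z w m m ^ k) ∂ν ∂ν := pair_ineq hPL k a b
      _ ≤ ∫⁻ z, ∫⁻ w, ENNReal.ofReal ((exp (-1) / m ^ 2) ^ k) * ENNReal.ofReal (exp (k * |⟪z, w⟫|)) ∂ν ∂ν := by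
          refine lintegral_mono fun z => lintegral_mono fun w => ?_
          rw [← ENNReal.ofReal_mul (by positivity)]
          refine ENNReal.ofReal_le_ofReal ?_
          have h0 : 0 ≤ phiG z w m m := by rw [phiG_eq]; positivity
          calc phiG z w m m ^ k ≤ (exp (|⟪z, w⟫| - 1) / m ^ 2) ^ k := by
                gcongr; exact phi_upper z w m0
            _ = _ := by
                rw [exp_nat_mul, ← mul_pow, sub_eq_add_neg, exp_add]; congr 1; ring
      _ = ∫⁻ p, ENNReal.ofReal ((exp (-1) / m ^ 2) ^ k) * ENNReal.ofReal (exp (k * |⟪p.1, p.2⟫|))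
            ∂(ν.prod ν) := by
          rw [lintegral_prod]
          refine Measurable.aemeasurable ?_
          fun_prop
      _ ≤ _ := by
          rw [lintegral_const_mul _ (by fun_prop), ENNReal.ofReal_mul (by positivity)]
          gcongr
          exact exp_c_bound hν hτ hk hQ
  have hTr : (ν.prod ν).real T ≤ 2 * exp (k * (13 * τ ^ 2 + 2 * η - ((a - b) / (a + b)) ^ 2)) := by
    have h1 := ENNReal.toReal_mono (by finiteness) step
    rw [ENNReal.toReal_mul, ENNReal.toReal_ofReal (by positivity), ENNReal.toReal_ofReal (by positivity)] at h1
    change l ^ k * (ν.prod ν).real T ≤ _ at h1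
    have h2 : (ν.prod ν).real T ≤ (exp (-1) / m ^ 2 / l) ^ k * (2 * exp (k * τ ^ 2)) := by
      rw [div_pow _ l, div_mul_eq_mul_div, le_div_iff₀ (by positivity)]
      linarith
    refine h2.trans ?_
    have h3 : exp (-1) / m ^ 2 / l ≤ exp (12 * τ ^ 2 + 2 * η - ((a - b) / (a + b)) ^ 2) := by
      have e : exp (-1) / m ^ 2 / l = exp (12 * τ ^ 2 + 2 * η) * (a * b / m ^ 2) := by
        rw [hl, sub_sub, sub_eq_add_neg, exp_add, exp_neg (12 * τ ^ 2 + 2 * η)]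
        field_simp
      have e2 : a * b / m ^ 2 = 1 - ((a - b) / (a + b)) ^ 2 := by
        rw [hm]; field_simp; ring
      rw [e, e2, sub_eq_add_neg (12 * τ ^ 2 + 2 * η), exp_add (12 * τ ^ 2 + 2 * η)]
      exact mul_le_mul_of_nonneg_left (one_sub_le_exp_neg _) (by positivity)
    calc (exp (-1) / m ^ 2 / l) ^ k * (2 * exp (k * τ ^ 2))
        ≤ exp (12 * τ ^ 2 + 2 * η - ((a - b) / (a + b)) ^ 2) ^ k * (2 * exp (k * τ ^ 2)) := by gcongr
      _ = 2 * (exp (k * (12 * τ ^ 2 + 2 * η - ((a - b) / (a + b)) ^ 2)) * exp (k * τ ^ 2)) := by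
          rw [← exp_nat_mul]; ring
      _ = _ := by rw [← exp_add]; congr 2; ring
  have hQr : (ν.prod ν).real {p | η ≤ |⟪p.1, p.2⟫|} ≤ exp (-(4 * k * η)) :=
    ENNReal.toReal_le_of_le_ofReal (by positivity) (hQ η hη)
  have hsub : shell a τ ×ˢ shell b τ ⊆ {p | η ≤ |⟪p.1, p.2⟫|} ∪ T := by
    intro p hp
    rcases le_total η |⟪p.1, p.2⟫| with h | h
    · exact Or.inl h
    · exact Or.inr ⟨hp, h⟩
  rw [← measureReal_prod_prod]
  refine (measureReal_mono hsub).trans ((measureReal_union_le _ _).trans ?_)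
  exact add_le_add hQr hTr

/-- the truncation ball -/
def KB {n : ℕ} : Set (EuclideanSpace ℝ (Fin n)) := {z | ‖z‖ ≤ 16}

lemma measurableSet_KB {n : ℕ} : MeasurableSet (KB (n := n)) :=
  measurableSet_le measurable_norm measurable_const

lemma KB_mid {n : ℕ} : ∀ x ∈ (KB (n := n)), ∀ y ∈ (KB (n := n)), (1/2 : ℝ) • (x + y) ∈ (KB (n := n)) := by
  intro x hx y hy
  have hx : ‖x‖ ≤ 16 := hx
  have hy : ‖y‖ ≤ 16 := hy
  show ‖(1/2 : ℝ) • (x + y)‖ ≤ 16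
  rw [norm_smul, Real.norm_of_nonneg (by norm_num : (0:ℝ) ≤ 1/2)]
  linarith [norm_add_le x y]

lemma shell_empty_or {n : ℕ} (ρ : Measure (EuclideanSpace ℝ (Fin n))) {τ : ℝ}
    (hτ2 : τ ≤ 1/2) (a : ℝ) :
    (ρ.restrict KB).real (shell a τ) = 0 ∨ (1/2 ≤ a ∧ a ^ 2 ≤ 257) := by
  rcases Set.eq_empty_or_nonempty (shell (n := n) a τ ∩ KB) with h | ⟨z, ⟨h1, h2⟩, h3⟩
  · left
    rw [measureReal_restrict_apply (measurableSet_shell a τ), h, measureReal_empty]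
  · right
    have h3 : ‖z‖ ≤ 16 := h3
    have h4 := one_le_Vn z
    have h5 := Vn_sq z
    have h6 : 1/2 ≤ a := by linarith
    refine ⟨h6, ?_⟩
    have : a ^ 2 ≤ Vn z ^ 2 := by gcongr
    nlinarith [norm_nonneg z]

lemma shell_max {n : ℕ} (ρ : Measure (EuclideanSpace ℝ (Fin n))) {τ : ℝ} (hτ : 0 < τ)
    (hτ2 : τ ≤ 1/2) : ∃ i : ℕ, ∀ j : ℕ, (ρ.restrict KB).real (shell (j * τ) τ) ≤
      (ρ.restrict KB).real (shell (i * τ) τ) := by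
  obtain ⟨i, -, hi⟩ := Finset.exists_max_image (Finset.range (⌈17 / τ⌉₊ + 1))
    (fun j : ℕ => (ρ.restrict KB).real (shell (n := n) (j * τ) τ)) ⟨0, by simp⟩
  refine ⟨i, fun j => ?_⟩
  by_cases hj : j ∈ Finset.range (⌈17 / τ⌉₊ + 1)
  · exact hi j hj
  · have h1 : ⌈17 / τ⌉₊ < j := by simpa using hj
    have h2 : 17 / τ < j := Nat.lt_of_ceil_lt h1
    rw [div_lt_iff₀ hτ] at h2
    rcases shell_empty_or ρ hτ2 (j * τ) with h | ⟨h3, h4⟩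
    · rw [h]; positivity
    · nlinarith

lemma shell_bound {n : ℕ} {ρ : Measure (EuclideanSpace ℝ (Fin n))} [IsProbabilityMeasure ρ]
    (hPL : PLMeas ρ) {τ : ℝ} (hτ : 0 < τ) (hτ2 : τ ≤ 1/2) {k : ℕ} (hk : 1/2 ≤ k * τ ^ 2)
    (hQ : ∀ η, τ ^ 2 ≤ η → ((ρ.restrict KB).prod (ρ.restrict KB)) {p | η ≤ |⟪p.1, p.2⟫|}
      ≤ ENNReal.ofReal (exp (-(4 * k * η))))
    {i : ℕ} (hi : ∀ j : ℕ, (ρ.restrict KB).real (shell (j * τ) τ) ≤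
      (ρ.restrict KB).real (shell (i * τ) τ)) {j d : ℕ} (hd : 7200 ≤ d) (hij : j = i + d ∨ i = j + d) :
    (ρ.restrict KB).real (shell (j * τ) τ) ≤ 2 * exp (-(2 * (k * τ ^ 2) * d)) := by
  set ν := ρ.restrict (KB (n := n)) with hν
  rcases shell_empty_or ρ hτ2 (j * τ) with h | ⟨h1, h2⟩
  · rw [h]; positivity
  rcases shell_empty_or ρ hτ2 (i * τ) with h | ⟨h3, h4⟩
  · refine (hi j).trans ?_
    rw [h]; positivity
  have hd' : (7200:ℝ) ≤ d := by exact_mod_cast hd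
  have hp := shell_pair (hPL.restrict measurableSet_KB KB_mid) (by
    rw [Measure.restrict_apply_univ]; exact prob_le_one) hτ hk hQ h1 h3 (η := d * τ ^ 2)
    (by nlinarith [sq_nonneg τ])
  have hdiff : ((j:ℝ) * τ - i * τ) ^ 2 = (d * τ) ^ 2 := by
    rcases hij with h | h <;> rw [h] <;> push_cast <;> ring
  set a := (j:ℝ) * τ
  set b := (i:ℝ) * τ
  have hr : d ^ 2 * τ ^ 2 / 1028 ≤ ((a - b) / (a + b)) ^ 2 := by
    rw [div_pow, hdiff, mul_pow]
    gcongr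
    nlinarith [sq_nonneg (a - b)]
  set x := (k:ℝ) * τ ^ 2 with hx
  have hexp : (k:ℝ) * (13 * τ ^ 2 + 2 * (d * τ ^ 2) - ((a - b) / (a + b)) ^ 2) ≤ -(4 * k * (d * τ ^ 2)) := by
    calc (k:ℝ) * (13 * τ ^ 2 + 2 * (d * τ ^ 2) - ((a - b) / (a + b)) ^ 2)
        ≤ k * (13 * τ ^ 2 + 2 * (d * τ ^ 2) - d ^ 2 * τ ^ 2 / 1028) := by gcongr
      _ = x * (13 + 2 * d - d ^ 2 / 1028) := by rw [hx]; ring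
      _ ≤ x * (-(4 * d)) := by
          gcongr
          nlinarith
      _ = _ := by rw [hx]; ring
  have hle := exp_le_exp.2 hexp
  have hji := hi j
  have h0 : 0 ≤ ν.real (shell (n := n) a τ) := measureReal_nonneg
  have e4 : exp (-(4 * k * (d * τ ^ 2))) = exp (-(2 * x * d)) ^ 2 := by
    rw [← exp_nat_mul, hx]; congr 1; push_cast; ring
  have hsq : ν.real (shell (n := n) a τ) ^ 2 ≤ (2 * exp (-(2 * x * d))) ^ 2 := by
    rw [e4] at hp hle
    nlinarith [mul_le_mul_of_nonneg_left hji h0, sq_nonneg (exp (-(2 * x * d)))]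
  exact (le_abs_self _).trans (abs_le_of_sq_le_sq hsq (by positivity))

lemma shell_conc {n : ℕ} {ρ : Measure (EuclideanSpace ℝ (Fin n))} [IsProbabilityMeasure ρ]
    (hPL : PLMeas ρ) {τ : ℝ} (hτ : 0 < τ) (hτ2 : τ ≤ 1/2) {k : ℕ} (hk : 1/2 ≤ k * τ ^ 2)
    (hQ : ∀ η, τ ^ 2 ≤ η → ((ρ.restrict KB).prod (ρ.restrict KB)) {p | η ≤ |⟪p.1, p.2⟫|}
      ≤ ENNReal.ofReal (exp (-(4 * k * η)))) :
    ∃ i : ℕ, ∀ d : ℕ, 7200 ≤ d → (ρ.restrict KB).real {z | d * τ ≤ |Vn z - i * τ|}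
      ≤ 8 * exp (-(2 * (k * τ ^ 2) * d)) := by
  obtain ⟨i, hi⟩ := shell_max ρ hτ hτ2
  refine ⟨i, fun d hd => ?_⟩
  set ν := ρ.restrict (KB (n := n)) with hν
  set x := (k:ℝ) * τ ^ 2 with hx
  set E : ℕ → Set (EuclideanSpace ℝ (Fin n)) := fun e =>
    shell ((i + e : ℕ) * τ) τ ∪ (if e ≤ i then shell ((i - e : ℕ) * τ) τ else ∅) with hE
  have hEb : ∀ e, 7200 ≤ e → ν.real (E e) ≤ 4 * exp (-(2 * x * e)) := by
    intro e he
    refine (measureReal_union_le _ _).trans ?_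
    have h1 := shell_bound hPL hτ hτ2 hk hQ hi he (Or.inl (rfl : i + e = i + e))
    have h2 : ν.real (if e ≤ i then shell (n := n) ((i - e : ℕ) * τ) τ else ∅) ≤ 2 * exp (-(2 * x * e)) := by
      split_ifs with h
      · exact shell_bound hPL hτ hτ2 hk hQ hi he (Or.inr (by omega))
      · simp; positivity
    linarith
  have hsub : {z : EuclideanSpace ℝ (Fin n) | d * τ ≤ |Vn z - i * τ|} ⊆ ⋃ j : ℕ, E (d + j) := by
    intro z hz
    have hz : d * τ ≤ |Vn z - i * τ| := hz
    set N := ⌊Vn z / τ⌋₊ with hN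
    have V0 := Vn_pos z
    have h1 : (N : ℝ) ≤ Vn z / τ := Nat.floor_le (by positivity)
    have h2 : Vn z / τ < N + 1 := Nat.lt_floor_add_one _
    rw [le_div_iff₀ hτ] at h1
    rw [div_lt_iff₀ hτ] at h2
    have hmem : z ∈ shell (N * τ) τ := ⟨h1, by linarith⟩
    rcases le_abs'.1 hz with h | h
    · have h3 : N + d ≤ i := by
        have : ((N + d : ℕ) : ℝ) * τ ≤ i * τ := by push_cast; linarith
        exact_mod_cast le_of_mul_le_mul_right this hτ
      refine Set.mem_iUnion.2 ⟨i - N - d, Or.inr ?_⟩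
      have e1 : d + (i - N - d) = i - N := by omega
      have e2 : i - (i - N) = N := by omega
      rw [e1, if_pos (by omega), e2]
      exact hmem
    · have h3 : i + d ≤ N := by
        have : ((i + d : ℕ) : ℝ) * τ < (N + 1 : ℕ) * τ := by push_cast; linarith
        have := lt_of_mul_lt_mul_right this hτ.le
        have : i + d < N + 1 := by exact_mod_cast this
        omega
      refine Set.mem_iUnion.2 ⟨N - i - d, Or.inl ?_⟩
      have e1 : i + (d + (N - i - d)) = N := by omega
      rw [e1]
      exact hmem
  have he1 : exp (-(2 * x)) ≤ 1/2 := by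
    have h2 : 1 + 1 ≤ exp (2 * x) := by linarith [add_one_le_exp (2 * x)]
    rw [exp_neg, inv_le_comm₀ (by positivity) (by norm_num)]
    linarith
  have hs : HasSum (fun j : ℕ => 4 * exp (-(2 * x * d)) * (1/2 : ℝ) ^ j) (8 * exp (-(2 * x * d))) := by
    have h := hasSum_geometric_two.mul_left (4 * exp (-(2 * x * d)))
    have e : 4 * exp (-(2 * x * d)) * 2 = 8 * exp (-(2 * x * d)) := by ring
    rwa [e] at h
  refine ENNReal.toReal_le_of_le_ofReal (by positivity) ?_
  calc ν {z | d * τ ≤ |Vn z - i * τ|} ≤ ∑' j, ν (E (d + j)) :=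
        (measure_mono hsub).trans (measure_iUnion_le _)
    _ ≤ ∑' j : ℕ, ENNReal.ofReal (4 * exp (-(2 * x * d)) * (1/2 : ℝ) ^ j) := by
        refine ENNReal.tsum_le_tsum fun j => ?_
        rw [← ofReal_measureReal]
        refine ENNReal.ofReal_le_ofReal ((hEb _ (by omega)).trans ?_)
        calc 4 * exp (-(2 * x * (d + j : ℕ))) = 4 * exp (-(2 * x * d)) * exp (-(2 * x)) ^ j := by
              have e : exp (-(2 * x * (d + j : ℕ))) = exp (-(2 * x * d)) * exp (-(2 * x)) ^ j := by
                rw [← exp_nat_mul, ← exp_add]; congr 1; push_cast; ring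
              rw [e]; ring
          _ ≤ _ := by gcongr
    _ = _ := by
        rw [← ENNReal.ofReal_tsum_of_nonneg (fun i => by positivity) hs.summable, hs.tsum_eq]

lemma markov_inner {n : ℕ} {ρ : Measure (EuclideanSpace ℝ (Fin n))} [IsProbabilityMeasure ρ]
    {ε α : ℝ} (hε : 0 < ε)
    (hmom : ∀ θ : EuclideanSpace ℝ (Fin n), ∀ p : ℝ, 2 ≤ p →
      ∫⁻ z, ENNReal.ofReal (|⟪z, θ⟫| ^ p) ∂ρ ≤ ENNReal.ofReal ((ε * p ^ (1/α) * ‖θ‖) ^ p))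
    {θ : EuclideanSpace ℝ (Fin n)} (hθ : ‖θ‖ ≤ 16) {η p : ℝ} (hη : 0 < η) (hp : 2 ≤ p) :
    ρ {z | η ≤ |⟪z, θ⟫|} ≤ ENNReal.ofReal ((16 * ε * p ^ (1/α) / η) ^ p) := by
  have hm : AEMeasurable (fun z => ENNReal.ofReal (|⟪z, θ⟫| ^ p)) ρ := by
    refine Measurable.aemeasurable ?_
    fun_prop
  have h1 := mul_meas_ge_le_lintegral₀ hm (ENNReal.ofReal (η ^ p))
  have h2 : ρ {z | η ≤ |⟪z, θ⟫|} ≤ ρ {z | ENNReal.ofReal (η ^ p) ≤ ENNReal.ofReal (|⟪z, θ⟫| ^ p)} := by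
    refine measure_mono fun z hz => ?_
    exact ENNReal.ofReal_le_ofReal (rpow_le_rpow hη.le hz (by linarith))
  have hηp : 0 < η ^ p := rpow_pos_of_pos hη _
  have hpp : 0 < p ^ (1/α) := rpow_pos_of_pos (by linarith) _
  have h3 : ENNReal.ofReal (η ^ p) * ρ {z | η ≤ |⟪z, θ⟫|} ≤ ENNReal.ofReal ((ε * p ^ (1/α) * 16) ^ p) := by
    refine ((mul_le_mul_right h2 _).trans (h1.trans (hmom θ p hp))).trans ?_
    refine ENNReal.ofReal_le_ofReal (rpow_le_rpow (by positivity) (by gcongr) (by linarith))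
  rw [mul_comm, ← ENNReal.le_div_iff_mul_le (Or.inl (by simpa using hηp)) (Or.inl (by simp)),
    ← ENNReal.ofReal_div_of_pos hηp, ← div_rpow (by positivity) hη.le] at h3
  refine h3.trans (le_of_eq ?_)
  congr 3
  ring

lemma c_tail {n : ℕ} {ρ : Measure (EuclideanSpace ℝ (Fin n))} [IsProbabilityMeasure ρ]
    {ε α : ℝ} (hε : 0 < ε) (hα : 1 ≤ α)
    (hmom : ∀ θ : EuclideanSpace ℝ (Fin n), ∀ p : ℝ, 2 ≤ p →
      ∫⁻ z, ENNReal.ofReal (|⟪z, θ⟫| ^ p) ∂ρ ≤ ENNReal.ofReal ((ε * p ^ (1/α) * ‖θ‖) ^ p))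
    {τ : ℝ} {k : ℕ} (hτ : 0 < τ) (hk : 1/2 ≤ k * τ^2)
    (hc : 48 * ε * (4 * k) ^ (1/α) ≤ (τ^2) ^ (1 - 1/α)) {η : ℝ} (hη : τ^2 ≤ η) :
    ((ρ.restrict KB).prod (ρ.restrict KB)) {p | η ≤ |⟪p.1, p.2⟫|} ≤
      ENNReal.ofReal (exp (-(4*k*η))) := by
  have hη0 : 0 < η := lt_of_lt_of_le (by positivity) hη
  have hk0 : (0:ℝ) ≤ k := by positivity
  have hp : 2 ≤ 4 * k * η := by nlinarith
  have hα' : 0 ≤ 1 - 1/α := by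
    rw [sub_nonneg, div_le_one (by linarith)]; exact hα
  have hb : 16 * ε * (4 * k * η) ^ (1/α) / η ≤ exp (-1) := by
    rw [div_le_iff₀ hη0, mul_rpow (by positivity) hη0.le]
    have h1 : (τ^2) ^ (1 - 1/α) ≤ η ^ (1 - 1/α) := rpow_le_rpow (by positivity) hη hα'
    have h2 : η ^ (1 - 1/α) * η ^ (1/α) = η := by
      rw [← rpow_add hη0]; simp
    have h3 : 0 < η ^ (1/α) := rpow_pos_of_pos hη0 _
    have h4 : 48 * ε * (4 * k) ^ (1/α) * η ^ (1/α) ≤ η := by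
      calc _ ≤ η ^ (1 - 1/α) * η ^ (1/α) := by gcongr; exact hc.trans h1
        _ = η := h2
    have h5 : 1/3 ≤ exp (-1) := by
      rw [exp_neg, one_div]
      exact inv_anti₀ (exp_pos 1) (by linarith [exp_one_lt_d9])
    nlinarith
  have hms : MeasurableSet {p : EuclideanSpace ℝ (Fin n) × EuclideanSpace ℝ (Fin n) | η ≤ |⟪p.1, p.2⟫|} := by
    refine measurableSet_le measurable_const ?_
    fun_prop
  rw [Measure.prod_apply_symm hms]
  have hpt : ∀ᵐ y ∂(ρ.restrict KB), (ρ.restrict KB) ((fun x => (x, y)) ⁻¹' {p | η ≤ |⟪p.1, p.2⟫|}) ≤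
      ENNReal.ofReal (exp (-(4*k*η))) := by
    filter_upwards [ae_restrict_mem measurableSet_KB] with y hy
    refine (Measure.restrict_apply_le _ _).trans ?_
    refine (markov_inner hε hmom (θ := y) hy hη0 hp).trans (ENNReal.ofReal_le_ofReal ?_)
    have hpp : 0 < (4 * k * η) ^ (1/α) := rpow_pos_of_pos (by linarith) _
    calc _ ≤ (exp (-1)) ^ (4 * k * η) := rpow_le_rpow (by positivity) hb (by linarith)
      _ = _ := by rw [← exp_mul]; congr 1; ring
  calc _ ≤ ∫⁻ y, ENNReal.ofReal (exp (-(4*k*η))) ∂(ρ.restrict KB) := lintegral_mono_ae hpt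
    _ = ENNReal.ofReal (exp (-(4*k*η))) * ρ KB := by simp
    _ ≤ ENNReal.ofReal (exp (-(4*k*η))) * 1 := by gcongr; exact prob_le_one
    _ = _ := mul_one _

/-- choice of parameters -/
lemma param_cond {ε α c t : ℝ} (hε : 0 < ε) (hα : 1 ≤ α) (hα2 : α ≤ 2) (hc : 0 < c) (hc1 : c ≤ 1)
    (ht : 0 < t) (ht1 : t ≤ 1) {k : ℝ} (hk0 : 0 ≤ k) (hk : k ≤ (c/96)^2 * (t ^ α * ε ^ (-α))) :
    48 * ε * (4 * k) ^ (1/α) ≤ ((c*t)^2) ^ (1 - 1/α) := by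
  have ha : 0 < α := by linarith
  have e1 : t ^ α * ε ^ (-α) = (t/ε) ^ α := by
    rw [div_rpow ht.le hε.le, rpow_neg hε.le]; rfl
  rw [e1] at hk
  have hte : 0 < t/ε := by positivity
  have h1 : (4 * k) ^ (1/α) ≤ (c/48) * (t/ε) := by
    have h0 : 4 * k ≤ (c/48)^2 * (t/ε)^α := by nlinarith
    calc (4*k) ^ (1/α) ≤ ((c/48)^2 * (t/ε)^α) ^ (1/α) := rpow_le_rpow (by positivity) h0 (by positivity)
      _ = ((c/48)^2)^(1/α) * (t/ε) := by
        rw [mul_rpow (by positivity) (by positivity), ← rpow_mul hte.le, mul_one_div_cancel ha.ne', rpow_one]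
      _ ≤ (c/48) * (t/ε) := by
        gcongr
        rw [← rpow_natCast, ← rpow_mul (by positivity)]
        calc (c/48) ^ (((2:ℕ):ℝ) * (1/α)) ≤ (c/48) ^ (1:ℝ) := by
              refine rpow_le_rpow_of_exponent_ge (by positivity) (by linarith) ?_
              rw [mul_one_div, le_div_iff₀ ha]; push_cast; linarith
          _ = _ := rpow_one _
  have h2 : c * t ≤ ((c*t)^2) ^ (1 - 1/α) := by
    have hct : 0 < c * t := by positivity
    have hct1 : c * t ≤ 1 := by nlinarith
    rw [← rpow_natCast, ← rpow_mul hct.le]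
    calc c * t = (c*t)^(1:ℝ) := (rpow_one _).symm
      _ ≤ _ := by
        refine rpow_le_rpow_of_exponent_ge hct hct1 ?_
        have : 1/2 ≤ 1/α := one_div_le_one_div_of_le ha hα2
        push_cast; linarith
  calc 48 * ε * (4*k)^(1/α) ≤ 48 * ε * ((c/48) * (t/ε)) := by gcongr
    _ = c * t := by field_simp
    _ ≤ _ := h2

lemma norm_le_two {n : ℕ} {ρ : Measure (EuclideanSpace ℝ (Fin n))} [IsProbabilityMeasure ρ]
    (hE : ∫⁻ z, ENNReal.ofReal (‖z‖^2) ∂ρ = 1) : 3/4 ≤ ρ.real {z | ‖z‖ ≤ 2} := by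
  have hm : AEMeasurable (fun z : EuclideanSpace ℝ (Fin n) => ENNReal.ofReal (‖z‖^2)) ρ := by
    refine Measurable.aemeasurable ?_
    fun_prop
  have h1 := mul_meas_ge_le_lintegral₀ hm (ENNReal.ofReal 4)
  rw [hE] at h1
  have hms : MeasurableSet {z : EuclideanSpace ℝ (Fin n) | ‖z‖ ≤ 2} :=
    measurableSet_le measurable_norm measurable_const
  have h2 : ρ {z | ‖z‖ ≤ 2}ᶜ ≤ ρ {z | ENNReal.ofReal 4 ≤ ENNReal.ofReal (‖z‖^2)} := by
    refine measure_mono fun z hz => ?_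
    have hz : ¬ ‖z‖ ≤ 2 := hz
    exact ENNReal.ofReal_le_ofReal (by nlinarith)
  have h3 : ENNReal.ofReal 4 * ρ {z | ‖z‖ ≤ 2}ᶜ ≤ 1 := (mul_le_mul_right h2 _).trans h1
  have h4 : 4 * ρ.real {z | ‖z‖ ≤ 2}ᶜ ≤ 1 := by
    have := ENNReal.toReal_mono (by simp) h3
    rwa [ENNReal.toReal_mul, ENNReal.toReal_ofReal (by norm_num), ENNReal.toReal_one] at this
  rw [probReal_compl_eq_one_sub hms] at h4
  linarith

lemma asmA {n : ℕ} {ρ : Measure (EuclideanSpace ℝ (Fin n))} [IsProbabilityMeasure ρ]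
    (hPL : PLMeas ρ) (hE : ∫⁻ z, ENNReal.ofReal (‖z‖^2) ∂ρ = 1)
    {τ a : ℝ} {k : ℕ} (hτ : 0 < τ) (hτ2 : τ ≤ 1/1000000) (hk : 1/2 ≤ k * τ^2) (ha : 0 ≤ a)
    (H : ∀ d : ℕ, 7200 ≤ d → (ρ.restrict KB).real {z | d*τ ≤ |Vn z - a|} ≤ 8*exp (-(2*(k*τ^2)*d))) :
    a < 7/2 ∧ ∀ s, 7 ≤ s → ρ.real {z | s ≤ ‖z‖} ≤ 2 * exp (-(k*τ * (s/14))) := by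
  have hN2 := norm_le_two hE
  set d : ℕ := ⌈1/τ⌉₊ with hd
  have hd1 : 1/τ ≤ d := Nat.le_ceil _
  have hd2 : (d:ℝ) < 1/τ + 1 := Nat.ceil_lt_add_one (by positivity)
  have h1τ : (1000000:ℝ) ≤ 1/τ := by
    rw [le_div_iff₀ hτ]; linarith
  have hd3 : 7200 ≤ d := by
    have : ((7200:ℕ):ℝ) ≤ d := by push_cast; linarith
    exact_mod_cast this
  have hdτ : d * τ ≤ 1.1 := by
    have : d * τ ≤ (1/τ+1) * τ := by gcongr
    have e : (1/τ+1)*τ = 1 + τ := by field_simp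
    linarith
  have hL : 500000 ≤ k * τ := by
    have : k * τ = k * τ^2 * (1/τ) := by field_simp
    rw [this]; nlinarith
  have hxd : 2 * (k*τ) ≤ 2*(k*τ^2)*d := by
    have : 2 * (k*τ) = 2 * (k * τ^2) * (1/τ) := by field_simp
    rw [this]; gcongr
  have hexp : ∀ y : ℝ, 100 ≤ y → 8 * (4/3) * exp (-y) ≤ 1/2 := by
    intro y hy
    have h1 := add_one_le_exp y
    have h2 : exp (-y) * exp y = 1 := by rw [← exp_add]; simp
    have := exp_pos (-y)
    nlinarith
  have hB := H d hd3
  have hB' : (ρ.restrict KB).real {z | d*τ ≤ |Vn z - a|} ≤ 8 * exp (-(2*(k*τ))) :=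
    hB.trans (by gcongr)
  have hKm : ∀ S : Set (EuclideanSpace ℝ (Fin n)), MeasurableSet S → S ⊆ KB → (∀ z ∈ S, 1.1 ≤ |Vn z - a|) →
      ρ.real S ≤ 8 * exp (-(2*(k*τ))) := by
    intro S hS hSK hz
    have : (ρ.restrict KB).real S = ρ.real S := by
      rw [measureReal_restrict_apply hS, Set.inter_eq_left.2 hSK]
    rw [← this]
    refine le_trans (measureReal_mono fun z h => ?_) hB'
    exact hdτ.trans (hz z h)
  have ha2 : a < 7/2 := by
    by_contra hcon
    push Not at hcon
    have := hKm {z | ‖z‖ ≤ 2} (measurableSet_le measurable_norm measurable_const)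
      (fun z (hz : ‖z‖ ≤ 2) => show ‖z‖ ≤ 16 by linarith) (fun z (hz : ‖z‖ ≤ 2) => by
        have h1 := Vn_sq z
        have h2 := Vn_pos z
        have h3 := norm_nonneg z
        have h4 : Vn z ≤ 2.3 := by nlinarith
        rw [abs_sub_comm]
        refine le_trans ?_ (le_abs_self _)
        linarith)
    have := hexp (2*(k*τ)) (by linarith)
    linarith
  refine ⟨ha2, fun s hs => ?_⟩
  have hA := hKm (annu (5*1) (16*1)) (measurableSet_annu _ _) (fun z hz => by
        show ‖z‖ ≤ 16
        have := hz.2; linarith) (fun z hz => by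
        have h1 := Vn_sq z
        have h2 := Vn_pos z
        have h3 : 5 * 1 ≤ ‖z‖ := hz.1
        have h4 : 5 ≤ Vn z := by nlinarith
        refine le_trans ?_ (le_abs_self _)
        linarith)
  have e2 : exp (-(2*(k*τ))) = exp (-(k*τ)) * exp (-(k*τ)) := by rw [← exp_add]; congr 1; ring
  have h5 := hexp (k*τ) (by linarith)
  have h6 := exp_pos (-(k*τ))
  have := borell_exp hPL (r := 1) one_pos (by simpa using hN2) (L := k*τ) (by
    rw [e2] at hA
    have h7 := mul_le_mul_of_nonneg_right h5 h6.le
    refine (mul_le_mul_of_nonneg_left hA (by norm_num)).trans ?_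
    linarith) (by linarith) (s := s) (by linarith)
  simpa using this

lemma asmB1 {n : ℕ} {ρ : Measure (EuclideanSpace ℝ (Fin n))} [IsProbabilityMeasure ρ]
    {τ a : ℝ} {k : ℕ} (hτ : 0 < τ) (hk : 1/2 ≤ k * τ^2)
    (H : ∀ d : ℕ, 7200 ≤ d → (ρ.restrict KB).real {z | d*τ ≤ |Vn z - a|} ≤ 8*exp (-(2*(k*τ^2)*d))) :
    ∫⁻ z, ENNReal.ofReal (KB.indicator (fun z => |Vn z - a|) z) ∂ρ ≤ ENNReal.ofReal (7208 * τ) := by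
  set f : EuclideanSpace ℝ (Fin n) → ℝ := KB.indicator (fun z => max (|Vn z - a| - 7200*τ) 0) with hf
  have hmV := measurable_Vn (n := n)
  have hfm : Measurable f := by
    refine Measurable.indicator ?_ measurableSet_KB
    fun_prop
  have hf0 : ∀ z, 0 ≤ f z := fun z => Set.indicator_nonneg (fun _ _ => le_max_right _ _) z
  have h1 := tail_moment (μ := ρ) hfm hf0 (M := 8) (l := 1/τ) (p := 1) (by norm_num) (by positivity) one_pos (by
    intro t ht
    set d : ℕ := ⌊7200 + t/τ⌋₊ with hd
    have htτ : 0 < t/τ := by positivity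
    have hd1 : (d:ℝ) ≤ 7200 + t/τ := Nat.floor_le (by positivity)
    have hd2 : 7200 + t/τ < d + 1 := Nat.lt_floor_add_one _
    have hd3 : 7200 ≤ d := Nat.le_floor (by push_cast; linarith)
    have hms : MeasurableSet {x | t ≤ f x} := measurableSet_le measurable_const hfm
    have hsub : {x | t ≤ f x} ⊆ KB := by
      intro z hz
      by_contra hcon
      have hz : t ≤ f z := hz
      rw [hf, Set.indicator_of_notMem hcon] at hz
      linarith
    have e : (ρ.restrict KB).real {x | t ≤ f x} = ρ.real {x | t ≤ f x} := by
      rw [measureReal_restrict_apply hms, Set.inter_eq_left.2 hsub]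
    rw [← e]
    refine (measureReal_mono (s₂ := {z | d*τ ≤ |Vn z - a|}) ?_).trans ((H d hd3).trans ?_)
    · intro z hz
      have hzK := hsub hz
      have hz : t ≤ f z := hz
      rw [hf, Set.indicator_of_mem hzK] at hz
      rcases le_max_iff.1 hz with h | h
      · show d * τ ≤ |Vn z - a|
        have : d * τ ≤ (7200 + t/τ) * τ := by gcongr
        have e : (7200 + t/τ) * τ = 7200 * τ + t := by field_simp
        linarith
      · linarith
    · have e3 : 1 / τ * t = t / τ := by ring
      rw [e3]
      gcongr
      nlinarith)
  calc _ ≤ ∫⁻ z, (ENNReal.ofReal (7200*τ) + ENNReal.ofReal (f z ^ (1:ℝ))) ∂ρ := by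
        refine lintegral_mono fun z => ?_
        rw [← ENNReal.ofReal_add (by positivity) (by rw [rpow_one]; exact hf0 z), rpow_one]
        refine ENNReal.ofReal_le_ofReal ?_
        by_cases hz : z ∈ KB
        · rw [hf, Set.indicator_of_mem hz, Set.indicator_of_mem hz]
          linarith [le_max_left (|Vn z - a| - 7200*τ) 0]
        · rw [Set.indicator_of_notMem hz]
          have := hf0 z
          positivity
    _ = ENNReal.ofReal (7200*τ) + ∫⁻ z, ENNReal.ofReal (f z ^ (1:ℝ)) ∂ρ := by
        rw [lintegral_add_left measurable_const]; simp
    _ ≤ ENNReal.ofReal (7200*τ) + ENNReal.ofReal (8*τ) := by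
        gcongr
        refine h1.trans (ENNReal.ofReal_le_ofReal ?_)
        simp
    _ = _ := by rw [← ENNReal.ofReal_add (by positivity) (by positivity)]; congr 1; ring

lemma asmB2 {n : ℕ} {ρ : Measure (EuclideanSpace ℝ (Fin n))} [IsProbabilityMeasure ρ]
    {L : ℝ} (hL : 1 ≤ L)
    (H : ∀ s, 7 ≤ s → ρ.real {z | s ≤ ‖z‖} ≤ 2 * exp (-(L * (s/14)))) :
    ∫⁻ z, ENNReal.ofReal (KBᶜ.indicator (fun z => ‖z‖^2) z) ∂ρ ≤ ENNReal.ofReal (6272 / L) := by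
  set f : EuclideanSpace ℝ (Fin n) → ℝ := KBᶜ.indicator (fun z => ‖z‖) with hf
  have hfm : Measurable f := Measurable.indicator (by fun_prop) measurableSet_KB.compl
  have hf0 : ∀ z, 0 ≤ f z := fun z => Set.indicator_nonneg (fun _ _ => norm_nonneg _) z
  have h1 := tail_moment (μ := ρ) hfm hf0 (M := 2 * exp (-(L/2))) (l := 1/28) (p := 2) (by positivity) (by positivity) two_pos (by
    intro t ht
    refine (measureReal_mono (s₂ := {z | 8 + t/2 ≤ ‖z‖}) ?_).trans ((H (8+t/2) (by linarith)).trans ?_)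
    · intro z hz
      have hz : t ≤ f z := hz
      by_cases hK : z ∈ KBᶜ
      · rw [hf, Set.indicator_of_mem hK] at hz
        have hK : ¬ ‖z‖ ≤ 16 := hK
        show 8 + t/2 ≤ ‖z‖
        linarith
      · rw [hf, Set.indicator_of_notMem hK] at hz
        linarith
    · rw [mul_assoc, ← exp_add]
      gcongr
      nlinarith)
  calc _ = ∫⁻ z, ENNReal.ofReal (f z ^ (2:ℝ)) ∂ρ := by
        refine lintegral_congr fun z => ?_
        by_cases hz : z ∈ KBᶜ
        · rw [hf, Set.indicator_of_mem hz, Set.indicator_of_mem hz, rpow_two]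
        · rw [hf, Set.indicator_of_notMem hz, Set.indicator_of_notMem hz]; simp
    _ ≤ _ := by
        refine h1.trans (ENNReal.ofReal_le_ofReal ?_)
        have e : exp (-(L/2)) ≤ 2 / L := by
          rw [exp_neg, inv_le_comm₀ (exp_pos _) (by positivity), inv_div]
          linarith [add_one_le_exp (L/2)]
        have g : Gamma 2 = 1 := by
          exact Gamma_two
        rw [g, rpow_two]
        calc _ = 3136 * exp (-(L/2)) := by norm_num; ring
          _ ≤ 3136 * (2/L) := by gcongr
          _ = _ := by ring

lemma asmB {n : ℕ} {ρ : Measure (EuclideanSpace ℝ (Fin n))} [IsProbabilityMeasure ρ]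
    (hE : ∫⁻ z, ENNReal.ofReal (‖z‖^2) ∂ρ = 1)
    {τ a : ℝ} {k : ℕ} (hτ : 0 < τ) (hτ2 : τ ≤ 1/1000000) (hk : 1/2 ≤ k * τ^2) (ha : 0 ≤ a) (ha2 : a < 7/2)
    (H : ∀ d : ℕ, 7200 ≤ d → (ρ.restrict KB).real {z | d*τ ≤ |Vn z - a|} ≤ 8*exp (-(2*(k*τ^2)*d)))
    (H2 : ∀ s, 7 ≤ s → ρ.real {z | s ≤ ‖z‖} ≤ 2 * exp (-(k*τ * (s/14)))) :
    |a - √2| ≤ 176456 * τ := by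
  have hL : 1/(2*τ) ≤ k * τ := by
    have : k * τ = k * τ^2 * (1/τ) := by field_simp
    rw [this, mul_one_div]
    have := div_le_div_of_nonneg_right hk hτ.le
    calc 1/(2*τ) = 1/2/τ := by field_simp
      _ ≤ _ := by linarith [this]
  have hL1 : 1 ≤ k*τ := by
    refine le_trans ?_ hL
    rw [le_div_iff₀ (by positivity)]; linarith
  have b1 := asmB1 hτ hk H
  have b2 := asmB2 hL1 H2
  have hmV := measurable_Vn (n := n)
  have hN2 : Integrable (fun z : EuclideanSpace ℝ (Fin n) => ‖z‖^2) ρ := by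
    refine ⟨by fun_prop, ?_⟩
    rw [hasFiniteIntegral_iff_ofReal (.of_forall fun z => by positivity), hE]
    simp
  have hI : ∫ z, ‖z‖^2 ∂ρ = 1 := by
    rw [integral_eq_lintegral_of_nonneg_ae (.of_forall fun z => by positivity) hN2.1, hE]; simp
  have hint : Integrable (fun z : EuclideanSpace ℝ (Fin n) => Vn z ^2 - a^2) ρ := by
    simp_rw [Vn_sq]
    exact ((integrable_const _).add hN2).sub (integrable_const _)
  have hval : ∫ z, (Vn z ^2 - a^2) ∂ρ = 2 - a^2 := by
    simp_rw [Vn_sq]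
    have hadd : Integrable (fun z : EuclideanSpace ℝ (Fin n) => 1 + ‖z‖^2) ρ := (integrable_const _).add hN2
    rw [integral_sub hadd (integrable_const _), integral_add (integrable_const _) hN2, hI]
    simp; norm_num
  have hb : ENNReal.ofReal |2 - a^2| ≤ ENNReal.ofReal (176456 * τ) := by
    rw [← hval, ← Real.norm_eq_abs, ofReal_norm]
    refine (enorm_integral_le_lintegral_enorm _).trans ?_
    calc _ ≤ ∫⁻ z, (ENNReal.ofReal 21 * ENNReal.ofReal (KB.indicator (fun z => |Vn z - a|) z) + ENNReal.ofReal 2 * ENNReal.ofReal (KBᶜ.indicator (fun z => ‖z‖^2) z)) ∂ρ := by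
          refine lintegral_mono fun z => ?_
          rw [← ofReal_norm, Real.norm_eq_abs]
          have V1 := Vn_sq z
          have V0 := Vn_pos z
          have N0 := norm_nonneg z
          by_cases hz : z ∈ KB
          · rw [Set.indicator_of_mem hz, Set.indicator_of_notMem (by simpa using hz)]
            have hz : ‖z‖ ≤ 16 := hz
            have : Vn z ≤ 17 := by nlinarith
            rw [← ENNReal.ofReal_mul (by norm_num)]
            simp only [ENNReal.ofReal_zero, mul_zero, add_zero]
            refine ENNReal.ofReal_le_ofReal ?_
            rw [sq_sub_sq, abs_mul, abs_of_nonneg (by linarith : 0 ≤ Vn z + a)]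
            gcongr
            linarith
          · rw [Set.indicator_of_notMem hz, Set.indicator_of_mem (by simpa using hz)]
            have hz : ¬ ‖z‖ ≤ 16 := hz
            simp only [ENNReal.ofReal_zero, mul_zero, zero_add]
            rw [← ENNReal.ofReal_mul (by norm_num)]
            refine ENNReal.ofReal_le_ofReal ?_
            rw [V1, abs_of_nonneg (by nlinarith)]
            nlinarith
      _ = ENNReal.ofReal 21 * ∫⁻ z, ENNReal.ofReal (KB.indicator (fun z => |Vn z - a|) z) ∂ρ + ENNReal.ofReal 2 * ∫⁻ z, ENNReal.ofReal (KBᶜ.indicator (fun z => ‖z‖^2) z) ∂ρ := by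
          rw [lintegral_add_left, lintegral_const_mul' _ _ ENNReal.ofReal_ne_top, lintegral_const_mul' _ _ ENNReal.ofReal_ne_top]
          refine Measurable.const_mul (Measurable.ennreal_ofReal (Measurable.indicator ?_ measurableSet_KB)) _
          fun_prop
      _ ≤ ENNReal.ofReal 21 * ENNReal.ofReal (7208 * τ) + ENNReal.ofReal 2 * ENNReal.ofReal (12544 * τ) := by
          gcongr
          refine b2.trans (ENNReal.ofReal_le_ofReal ?_)
          rw [div_le_iff₀ (by linarith)]
          calc (6272:ℝ) = 12544 * τ * (1/(2*τ)) := by field_simp; norm_num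
            _ ≤ _ := by gcongr
      _ = _ := by
          rw [ ← ENNReal.ofReal_mul (by norm_num), ← ENNReal.ofReal_mul (by norm_num),
            ← ENNReal.ofReal_add (by positivity) (by positivity)]
          congr 1; ring
  have hb' : |2 - a^2| ≤ 176456 * τ := (ENNReal.ofReal_le_ofReal_iff (by positivity)).1 hb
  have s2 : √2 ^ 2 = 2 := Real.sq_sqrt (by norm_num)
  have s1 : 1 ≤ √2 := by rw [Real.one_le_sqrt]; norm_num
  have e : |2 - a^2| = |a - √2| * (a + √2) := by
    have e1 : |a - √2| * (a + √2) = |(a - √2) * (a + √2)| := by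
      rw [abs_mul, abs_of_nonneg (by linarith : 0 ≤ a + √2)]
    rw [e1, abs_sub_comm]
    congr 1
    linear_combination s2
  rw [e] at hb'
  nlinarith [abs_nonneg (a - √2)]

lemma asm {n : ℕ} {ρ : Measure (EuclideanSpace ℝ (Fin n))} [IsProbabilityMeasure ρ]
    (hPL : PLMeas ρ) (hE : ∫⁻ z, ENNReal.ofReal (‖z‖^2) ∂ρ = 1)
    {τ a : ℝ} {k : ℕ} (hτ : 0 < τ) (hτ2 : τ ≤ 1/1000000) (hk : 1/2 ≤ k * τ^2) (ha : 0 ≤ a)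
    (H : ∀ d : ℕ, 7200 ≤ d → (ρ.restrict KB).real {z | d*τ ≤ |Vn z - a|} ≤ 8*exp (-(2*(k*τ^2)*d))) :
    (∀ s, 7 ≤ s → ρ.real {z | s ≤ ‖z‖} ≤ 2 * exp (-(k*τ * (s/14)))) ∧
    ρ.real {z | 1000000 * τ ≤ |‖z‖ - 1|} ≤ 10 * exp (-(k*τ^2)) := by
  obtain ⟨ha2, H2⟩ := asmA hPL hE hτ hτ2 hk ha H
  refine ⟨H2, ?_⟩
  have hb := asmB hE hτ hτ2 hk ha ha2 H H2
  have hmV := measurable_Vn (n := n)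
  have hms : MeasurableSet {z : EuclideanSpace ℝ (Fin n) | ((7200:ℕ):ℝ)*τ ≤ |Vn z - a|} :=
    measurableSet_le measurable_const (by fun_prop)
  have hsub : {z | 1000000 * τ ≤ |‖z‖ - 1|} ⊆ ({z | ((7200:ℕ):ℝ)*τ ≤ |Vn z - a|} ∩ KB) ∪ {z : EuclideanSpace ℝ (Fin n) | 16 ≤ ‖z‖} := by
    intro z hz
    have hz : 1000000 * τ ≤ |‖z‖ - 1| := hz
    by_cases hz16 : 16 ≤ ‖z‖
    · exact Or.inr hz16
    refine Or.inl ⟨?_, show ‖z‖ ≤ 16 by linarith⟩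
    have V1 := Vn_sq z
    have V0 := Vn_pos z
    have N0 := norm_nonneg z
    have s2 : √2 ^ 2 = 2 := Real.sq_sqrt (by norm_num)
    have s0 : 0 ≤ √2 := Real.sqrt_nonneg 2
    have s3 : √2 ≤ 2 := by nlinarith
    have V3 : Vn z ≤ ‖z‖ + 1 := by nlinarith
    have e : |‖z‖ - 1| * (‖z‖ + 1) = |Vn z - √2| * (Vn z + √2) := by
      have e1 : |‖z‖ - 1| * (‖z‖ + 1) = |(‖z‖ - 1) * (‖z‖ + 1)| := by
        rw [abs_mul, abs_of_nonneg (by linarith : 0 ≤ ‖z‖ + 1)]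
      have e2 : |Vn z - √2| * (Vn z + √2) = |(Vn z - √2) * (Vn z + √2)| := by
        rw [abs_mul, abs_of_nonneg (by linarith : 0 ≤ Vn z + √2)]
      rw [e1, e2]
      congr 1
      nlinarith
    have h3 : |‖z‖ - 1| ≤ 3 * |Vn z - √2| := by
      have : |Vn z - √2| * (Vn z + √2) ≤ |Vn z - √2| * (3 * (‖z‖ + 1)) := by
        gcongr; linarith
      rw [← e] at this
      have h : |‖z‖ - 1| * (‖z‖ + 1) ≤ 3 * |Vn z - √2| * (‖z‖ + 1) := by linarith
      exact le_of_mul_le_mul_right h (by linarith)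
    have h4 : |Vn z - √2| ≤ |Vn z - a| + |a - √2| := abs_sub_le _ _ _
    show ((7200:ℕ):ℝ)*τ ≤ |Vn z - a|
    push_cast
    linarith
  have hk0 : (0:ℝ) ≤ k := by positivity
  have g1 : ρ.real ({z | ((7200:ℕ):ℝ)*τ ≤ |Vn z - a|} ∩ KB) ≤ 8 * exp (-(k*τ^2)) := by
    rw [← measureReal_restrict_apply hms]
    refine (H 7200 le_rfl).trans ?_
    refine mul_le_mul_of_nonneg_left (exp_le_exp.2 (neg_le_neg ?_)) (by norm_num)
    push_cast
    nlinarith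
  have g2 : ρ.real {z : EuclideanSpace ℝ (Fin n) | 16 ≤ ‖z‖} ≤ 2 * exp (-(k*τ^2)) := by
    refine (H2 16 (by norm_num)).trans ?_
    refine mul_le_mul_of_nonneg_left (exp_le_exp.2 (neg_le_neg ?_)) (by norm_num)
    have : 0 ≤ k * τ := by positivity
    nlinarith
  calc _ ≤ _ := measureReal_mono hsub
    _ ≤ _ := measureReal_union_le _ _
    _ ≤ _ := by linarith

/-- The small absolute constant. -/
def kap : ℝ := (1/1000000/96)^2
/-- The exponent constant. -/
def cz : ℝ := kap * (1/1000000)^2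

lemma kap_pos : 0 < kap := by unfold kap; norm_num
lemma cz_pos : 0 < cz := by unfold cz; have := kap_pos; positivity

lemma core_dich {n : ℕ} {ρ : Measure (EuclideanSpace ℝ (Fin n))} [IsProbabilityMeasure ρ]
    (hPL : PLMeas ρ) (hE : ∫⁻ z, ENNReal.ofReal (‖z‖^2) ∂ρ = 1)
    {ε α : ℝ} (hε : 0 < ε) (hα : 1 ≤ α) (hα2 : α ≤ 2)
    (hmom : ∀ θ : EuclideanSpace ℝ (Fin n), ∀ p : ℝ, 2 ≤ p →
      ∫⁻ z, ENNReal.ofReal (|⟪z, θ⟫| ^ p) ∂ρ ≤ ENNReal.ofReal ((ε * p ^ (1/α) * ‖θ‖) ^ p))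
    {t : ℝ} (ht : 0 < t) (ht1 : t ≤ 1) :
    ∃ y : ℝ, 0 ≤ y ∧ cz * ε ^ (-α) * t ^ (2+α) ≤ y + 1 ∧ (y < 1/2 ∨ (1/2 ≤ y ∧
      (∀ s, 7 ≤ s → ρ.real {z | s ≤ ‖z‖} ≤ 2 * exp (-(y * (s/14)))) ∧
      ρ.real {z | t ≤ |‖z‖ - 1|} ≤ 10 * exp (-y))) := by
  set τ : ℝ := 1/1000000 * t with hτdef
  have hτ : 0 < τ := by positivity
  have hτ2 : τ ≤ 1/1000000 := by rw [hτdef]; linarith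
  have hS : 0 < ε ^ (-α) := rpow_pos_of_pos hε _
  have htα : 0 < t ^ α := rpow_pos_of_pos ht _
  have hkap := kap_pos
  set k : ℕ := ⌊kap * (t ^ α * ε ^ (-α))⌋₊ with hk
  have k1 : (k:ℝ) ≤ kap * (t ^ α * ε ^ (-α)) := Nat.floor_le (by positivity)
  have k2 : kap * (t ^ α * ε ^ (-α)) < k + 1 := Nat.lt_floor_add_one _
  have hk0 : (0:ℝ) ≤ k := by positivity
  refine ⟨k * τ^2, by positivity, ?_, ?_⟩
  · have e : cz * ε ^ (-α) * t ^ (2+α) = kap * (t ^ α * ε ^ (-α)) * τ^2 := by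
      rw [rpow_add ht, rpow_two, hτdef]; unfold cz; ring
    rw [e]
    have h1 : kap * (t ^ α * ε ^ (-α)) * τ^2 ≤ (k+1) * τ^2 := by gcongr
    have h2 : τ^2 ≤ 1 := by nlinarith
    nlinarith
  · rcases lt_or_ge (k * τ^2) (1/2) with h | h
    · exact Or.inl h
    refine Or.inr ⟨h, ?_⟩
    have hc := param_cond hε hα hα2 (c := 1/1000000) (by norm_num) (by norm_num) ht ht1 hk0 k1
    obtain ⟨i, hi⟩ := shell_conc hPL hτ (by linarith) h (fun η hη => c_tail hε hα hmom hτ h hc hη)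
    obtain ⟨a1, a2⟩ := asm hPL hE hτ hτ2 h (a := i * τ) (by positivity) hi
    have e : 1000000 * τ = t := by rw [hτdef]; ring
    rw [e] at a2
    refine ⟨fun s hs => (a1 s hs).trans ?_, a2⟩
    refine mul_le_mul_of_nonneg_left (exp_le_exp.2 (neg_le_neg ?_)) (by norm_num)
    have : (k:ℝ) * τ^2 ≤ k * τ := by nlinarith [mul_nonneg hk0 hτ.le]
    have hs0 : 0 ≤ s/14 := by linarith
    exact mul_le_mul_of_nonneg_right this hs0

lemma core {n : ℕ} {ρ : Measure (EuclideanSpace ℝ (Fin n))} [IsProbabilityMeasure ρ]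
    (hPL : PLMeas ρ) (hE : ∫⁻ z, ENNReal.ofReal (‖z‖^2) ∂ρ = 1)
    {ε α : ℝ} (hε : 0 < ε) (hα : 1 ≤ α) (hα2 : α ≤ 2)
    (hmom : ∀ θ : EuclideanSpace ℝ (Fin n), ∀ p : ℝ, 2 ≤ p →
      ∫⁻ z, ENNReal.ofReal (|⟪z, θ⟫| ^ p) ∂ρ ≤ ENNReal.ofReal ((ε * p ^ (1/α) * ‖θ‖) ^ p))
    {t : ℝ} (ht : 0 ≤ t) :
    ρ.real {z | t ≤ |‖z‖ - 1|} ≤ 30 * exp (-(cz/42 * ε ^ (-α) * min (t ^ (2+α)) t)) := by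
  have hS : 0 < ε ^ (-α) := rpow_pos_of_pos hε _
  have hcz := cz_pos
  have he3 : exp 1 ≤ 3 := by linarith [exp_one_lt_d9]
  have hsmall : ∀ u : ℝ, 0 < u → u ≤ 1 → ρ.real {z | u ≤ |‖z‖ - 1|} ≤ 30 * exp (-(cz * ε ^ (-α) * u ^ (2+α))) := by
    intro u hu hu1
    obtain ⟨y, hy0, hy1, h⟩ := core_dich hPL hE hε hα hα2 hmom hu hu1
    have key : 10 * exp (-y) ≤ 30 * exp (-(cz * ε ^ (-α) * u ^ (2+α))) := by
      calc 10 * exp (-y) = 10 * (exp 1 * exp (-(y+1))) := by rw [← exp_add]; congr 2; ring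
        _ ≤ 10 * (3 * exp (-(cz * ε ^ (-α) * u ^ (2+α)))) := by gcongr
        _ = _ := by ring
    rcases h with h | ⟨h, h1, h2⟩
    · refine measureReal_le_one.trans (le_trans ?_ key)
      have := add_one_le_exp (-y)
      linarith
    · exact h2.trans key
  rcases le_or_gt t 1 with ht1 | ht1
  · rcases ht.eq_or_lt with rfl | ht0
    · refine measureReal_le_one.trans ?_
      have : (0:ℝ) ^ (2+α) = 0 := zero_rpow (by linarith)
      rw [this]; norm_num
    · refine (hsmall t ht0 ht1).trans ?_
      refine mul_le_mul_of_nonneg_left (exp_le_exp.2 (neg_le_neg ?_)) (by norm_num)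
      have hm : 0 ≤ min (t ^ (2+α)) t := le_min (rpow_nonneg ht _) ht
      calc cz/42 * ε ^ (-α) * min (t ^ (2+α)) t ≤ cz * ε ^ (-α) * min (t ^ (2+α)) t := by
            gcongr; linarith
        _ ≤ _ := by gcongr; exact min_le_left _ _
  have hfin : ∀ x, cz/42 * ε ^ (-α) * t ≤ x → 30 * exp (-x) ≤ 30 * exp (-(cz/42 * ε ^ (-α) * min (t ^ (2+α)) t)) := by
    intro x hx
    refine mul_le_mul_of_nonneg_left (exp_le_exp.2 (neg_le_neg (le_trans ?_ hx))) (by norm_num)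
    gcongr; exact min_le_right _ _
  rcases le_or_gt t 7 with ht7 | ht7
  · have h1 := hsmall 1 one_pos le_rfl
    rw [one_rpow, mul_one] at h1
    refine (measureReal_mono (fun z (hz : t ≤ |‖z‖ - 1|) => show 1 ≤ |‖z‖ - 1| by linarith)).trans (h1.trans (hfin _ ?_))
    have := mul_pos hcz hS
    nlinarith
  have hsub : ρ.real {z | t ≤ |‖z‖ - 1|} ≤ ρ.real {z | t ≤ ‖z‖} := by
    refine measureReal_mono fun z hz => ?_
    have hz : t ≤ |‖z‖ - 1| := hz
    show t ≤ ‖z‖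
    have := norm_nonneg z
    rcases le_abs'.1 hz with h | h <;> linarith
  refine hsub.trans ?_
  obtain ⟨y, hy0, hy1, h⟩ := core_dich hPL hE hε hα hα2 hmom one_pos le_rfl
  rw [one_rpow, mul_one] at hy1
  rcases h with h | ⟨h, h1, h2⟩
  · have hN2 := norm_le_two hE
    have hms : MeasurableSet {z : EuclideanSpace ℝ (Fin n) | ‖z‖ ≤ 2} :=
      measurableSet_le measurable_norm measurable_const
    have hA : ρ.real (annu (5*1) (16*1)) ≤ 1/25 := by
      have hm : AEMeasurable (fun z : EuclideanSpace ℝ (Fin n) => ENNReal.ofReal (‖z‖^2)) ρ := by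
        refine Measurable.aemeasurable ?_
        fun_prop
      have h1 := mul_meas_ge_le_lintegral₀ hm (ENNReal.ofReal 25)
      rw [hE] at h1
      have h2 : ρ (annu (5*1) (16*1)) ≤ ρ {z | ENNReal.ofReal 25 ≤ ENNReal.ofReal (‖z‖^2)} := by
        refine measure_mono fun z hz => ?_
        have hz : 5 * 1 ≤ ‖z‖ := hz.1
        exact ENNReal.ofReal_le_ofReal (by nlinarith)
      have h3 := (mul_le_mul_right h2 (ENNReal.ofReal 25)).trans h1
      have := ENNReal.toReal_mono (by simp) h3
      rw [ENNReal.toReal_mul, ENNReal.toReal_ofReal (by norm_num), ENNReal.toReal_one] at this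
      rw [le_div_iff₀ (by norm_num), mul_comm]
      exact this
    have e2 : exp (-(log 2)) = 1/2 := by rw [exp_neg, exp_log two_pos]; norm_num
    have hb := borell_exp hPL (r := 1) one_pos (by simpa using hN2) (L := log 2) (by
      rw [e2]
      refine (mul_le_mul_of_nonneg_left hA (by norm_num)).trans ?_
      norm_num) (by rw [e2]) (s := t) (by linarith)
    refine hb.trans (le_trans (b := 30 * exp (-(log 2 * (t / (14*1))))) (by gcongr; norm_num) (hfin _ ?_))
    have := log_two_gt_d9
    nlinarith
  · refine (h1 t ht7.le).trans (le_trans (b := 30 * exp (-(y * (t / 14)))) (by gcongr; norm_num) (hfin _ ?_))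
    have : cz * ε ^ (-α) ≤ 3 * y := by linarith
    nlinarith

lemma norm_moments {n : ℕ} {μ : Measure (EuclideanSpace ℝ (Fin n))} [IsProbabilityMeasure μ]
    (hPL : PLMeas μ) {p : ℝ} (hp : 0 < p) : ∫⁻ z, ENNReal.ofReal (‖z‖ ^ p) ∂μ < ∞ := by
  have hlim : Filter.Tendsto (fun r : ℕ => μ {z : EuclideanSpace ℝ (Fin n) | (r:ℝ) ≤ ‖z‖}) Filter.atTop (nhds 0) := by
    have h := tendsto_measure_iInter_atTop (μ := μ) (s := fun r : ℕ => {z : EuclideanSpace ℝ (Fin n) | (r:ℝ) ≤ ‖z‖})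
      (fun r => (measurableSet_le measurable_const measurable_norm).nullMeasurableSet)
      (fun a b hab z (hz : (b:ℝ) ≤ ‖z‖) => show (a:ℝ) ≤ ‖z‖ from le_trans (by exact_mod_cast hab) hz) ⟨0, measure_ne_top _ _⟩
    have e : (⋂ r : ℕ, {z : EuclideanSpace ℝ (Fin n) | (r:ℝ) ≤ ‖z‖}) = ∅ := by
      refine Set.eq_empty_of_forall_notMem fun z hz => ?_
      obtain ⟨m, hm⟩ := exists_nat_gt ‖z‖
      have : (m:ℝ) ≤ ‖z‖ := Set.mem_iInter.1 hz m
      linarith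
    rw [e, measure_empty] at h
    exact h
  have hev := (hlim.eventually_le_const (u := ENNReal.ofReal (1/4)) (by simp)).and (Filter.eventually_ge_atTop 1)
  obtain ⟨r, hr, hr1⟩ := hev.exists
  have hr0 : (1:ℝ) ≤ r := by exact_mod_cast hr1
  have hr' : μ.real {z : EuclideanSpace ℝ (Fin n) | (r:ℝ) ≤ ‖z‖} ≤ 1/4 :=
    ENNReal.toReal_le_of_le_ofReal (by norm_num) hr
  have hms : MeasurableSet {z : EuclideanSpace ℝ (Fin n) | ‖z‖ ≤ 2*r} :=
      measurableSet_le measurable_norm measurable_const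
  have h2 : 3/4 ≤ μ.real {z : EuclideanSpace ℝ (Fin n) | ‖z‖ ≤ 2*r} := by
    have h3 : μ.real {z : EuclideanSpace ℝ (Fin n) | ‖z‖ ≤ 2*r}ᶜ ≤ 1/4 := by
      refine (measureReal_mono fun z hz => ?_).trans hr'
      have hz : ¬ ‖z‖ ≤ 2*r := hz
      show (r:ℝ) ≤ ‖z‖
      linarith
    rw [probReal_compl_eq_one_sub hms] at h3
    linarith
  have e2 : exp (-(log 2)) = 1/2 := by rw [exp_neg, exp_log two_pos]; norm_num
  have hl2 : 0 < log 2 := log_pos (by norm_num)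
  have hb := fun s hs => borell_exp hPL (r := r) (by linarith) h2 (L := log 2) (by
      rw [e2]
      have : μ.real (annu (n := n) (5*r) (16*r)) ≤ 1/4 := by
        refine (measureReal_mono fun z hz => ?_).trans hr'
        have hz : 5*r ≤ ‖z‖ := hz.1
        show (r:ℝ) ≤ ‖z‖
        linarith
      linarith) (by rw [e2]) (s := s) hs
  refine lt_of_le_of_lt (tail_moment measurable_norm (fun z => norm_nonneg z) (M := 2) (l := log 2 / (14*r)) (by norm_num) (by positivity) hp ?_) ENNReal.ofReal_lt_top
  intro t ht
  have e3 : log 2 / (14*r) * t = log 2 * (t/(14*r)) := by ring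
  rw [e3]
  rcases le_or_gt (7*(r:ℝ)) t with h | h
  · exact hb t h
  · refine measureReal_le_one.trans ?_
    have h4 : exp (-(log 2)) ≤ exp (-(log 2 * (t/(14*r)))) := by
      refine exp_le_exp.2 (neg_le_neg ?_)
      have : t/(14*r) ≤ 1 := by rw [div_le_one (by positivity)]; linarith
      nlinarith
    rw [e2] at h4
    linarith

section
variable {Ω : Type} [MeasurableSpace Ω] {P : Measure Ω} [IsProbabilityMeasure P] {n : ℕ}
  {X : Ω → EuclideanSpace ℝ (Fin n)}

lemma inner_integrable (hX : Measurable X) (hPL : PLMeas (P.map X)) {p : ℝ} (hp : 0 < p)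
    (y : EuclideanSpace ℝ (Fin n)) : Integrable (fun ω => |⟪X ω, y⟫| ^ p) P := by
  have : IsProbabilityMeasure (P.map X) := Measure.isProbabilityMeasure_map hX.aemeasurable
  have h := norm_moments hPL hp
  rw [lintegral_map (by fun_prop) hX] at h
  have hm : Measurable (fun ω => |⟪X ω, y⟫| ^ p) := by fun_prop
  refine ⟨hm.aestronglyMeasurable, ?_⟩
  rw [hasFiniteIntegral_iff_ofReal (.of_forall fun z => by positivity)]
  calc ∫⁻ ω, ENNReal.ofReal (|⟪X ω, y⟫| ^ p) ∂P ≤ ∫⁻ ω, ENNReal.ofReal (‖y‖^p) * ENNReal.ofReal (‖X ω‖ ^ p) ∂P := by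
        refine lintegral_mono fun ω => ?_
        rw [← ENNReal.ofReal_mul (by positivity), ← mul_rpow (norm_nonneg _) (norm_nonneg _)]
        refine ENNReal.ofReal_le_ofReal (rpow_le_rpow (abs_nonneg _) ?_ hp.le)
        rw [mul_comm]
        exact abs_real_inner_le_norm _ _
    _ = ENNReal.ofReal (‖y‖^p) * ∫⁻ ω, ENNReal.ofReal (‖X ω‖ ^ p) ∂P := by
        rw [lintegral_const_mul' _ _ ENNReal.ofReal_ne_top]
    _ < ∞ := ENNReal.mul_lt_top ENNReal.ofReal_lt_top h

lemma inner_sq (hX : Measurable X) (hPL : PLMeas (P.map X)) (hI : Isotropic P X)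
    (y : EuclideanSpace ℝ (Fin n)) : ∫⁻ ω, ENNReal.ofReal (⟪X ω, y⟫ ^ 2) ∂P = ENNReal.ofReal (‖y‖^2) := by
  have h := inner_integrable hX hPL two_pos y
  simp only [rpow_two, sq_abs] at h
  rw [← ofReal_integral_eq_lintegral_ofReal h (.of_forall fun ω => by positivity)]
  congr 1
  rw [← real_inner_self_eq_norm_sq, ← hI.2 y y]
  simp only [sq]

lemma inner_moment (hX : Measurable X) (hPL : PLMeas (P.map X)) (hI : Isotropic P X) {α b : ℝ}
    (hψ : IsPsiAlpha P X α b) (y : EuclideanSpace ℝ (Fin n)) {p : ℝ} (hp : 2 ≤ p) :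
    ∫⁻ ω, ENNReal.ofReal (|⟪X ω, y⟫| ^ p) ∂P ≤ ENNReal.ofReal ((b * p ^ (1/α) * ‖y‖) ^ p) := by
  have hp0 : 0 < p := by linarith
  have h := inner_integrable hX hPL hp0 y
  rw [← ofReal_integral_eq_lintegral_ofReal h (.of_forall fun ω => by positivity)]
  refine ENNReal.ofReal_le_ofReal ?_
  have h1 := hψ p hp y
  have e : ∫ ω, ⟪X ω, y⟫ ^ 2 ∂P = ‖y‖^2 := by
    rw [← real_inner_self_eq_norm_sq, ← hI.2 y y]
    simp only [sq]
  have e2 : (‖y‖^2) ^ ((1:ℝ)/2) = ‖y‖ := by rw [← sqrt_eq_rpow, sqrt_sq (norm_nonneg _)]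
  rw [e, e2] at h1
  have h0 : 0 ≤ ∫ ω, |⟪X ω, y⟫| ^ p ∂P := integral_nonneg fun ω => by positivity
  calc _ = ((∫ ω, |⟪X ω, y⟫| ^ p ∂P) ^ (1/p)) ^ p := by
        rw [← rpow_mul h0, one_div_mul_cancel hp0.ne', rpow_one]
    _ ≤ _ := rpow_le_rpow (by positivity) h1 hp0.le

lemma b_pos (hn : 0 < n) (hI : Isotropic P X) {α b : ℝ}
    (hψ : IsPsiAlpha P X α b) : 0 < b := by
  set y : EuclideanSpace ℝ (Fin n) := EuclideanSpace.single ⟨0, hn⟩ 1 with hy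
  have hy1 : ‖y‖ = 1 := by simp [hy]
  have h1 := hψ 2 le_rfl y
  have e : ∫ ω, ⟪X ω, y⟫ ^ 2 ∂P = 1 := by
    have := hI.2 y y
    rw [real_inner_self_eq_norm_sq, hy1] at this
    simp only [sq] at this ⊢
    linarith
  simp only [rpow_two, sq_abs] at h1
  rw [e] at h1
  simp only [one_rpow, mul_one] at h1
  have h2 : 0 < (2:ℝ) ^ (1/α) := rpow_pos_of_pos two_pos _
  by_contra hb
  push Not at hb
  nlinarith

lemma hs_moment (hX : Measurable X) (hPL : PLMeas (P.map X)) (hI : Isotropic P X)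
    (A : Matrix (Fin n) (Fin n) ℝ) :
    ∫⁻ ω, ENNReal.ofReal (‖mApp A (X ω)‖^2) ∂P = ENNReal.ofReal (hsNorm A ^ 2) := by
  have e1 : ∀ x, ‖mApp A x‖^2 = ∑ i, ⟪x, WithLp.toLp 2 (A i)⟫ ^ 2 := by
    intro x
    rw [EuclideanSpace.norm_sq_eq]
    refine Finset.sum_congr rfl fun i _ => ?_
    rw [Real.norm_eq_abs, sq_abs]
    congr 1
  have e2 : hsNorm A ^ 2 = ∑ i, ‖(WithLp.toLp 2 (A i) : EuclideanSpace ℝ (Fin n))‖^2 := by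
    rw [hsNorm, Real.sq_sqrt (by positivity)]
    refine Finset.sum_congr rfl fun i _ => ?_
    rw [EuclideanSpace.norm_sq_eq]
    simp
  simp_rw [e1]
  rw [e2, ENNReal.ofReal_sum_of_nonneg (fun i _ => by positivity)]
  simp_rw [ENNReal.ofReal_sum_of_nonneg (fun i _ => sq_nonneg _)]
  rw [lintegral_finsetSum _ (fun i _ => by fun_prop)]
  exact Finset.sum_congr rfl fun i _ => inner_sq hX hPL hI _

end

theorem statement1 :
    ∃ c C : ℝ, 0 < c ∧ 0 < C ∧
      ∀ (n : ℕ) (Ω : Type) (_mΩ : MeasurableSpace Ω) (P : Measure Ω),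
        IsProbabilityMeasure P →
        ∀ (X : Ω → EuclideanSpace ℝ (Fin n)) (f : EuclideanSpace ℝ (Fin n) → ℝ)
          (α b : ℝ) (A : Matrix (Fin n) (Fin n) ℝ),
          HasDensityFn P X f → IsLogConcaveFn f → Isotropic P X →
          1 ≤ α → α ≤ 2 → IsPsiAlpha P X α b →
          hsNorm A ^ 2 = n →
          ∀ t : ℝ, 0 ≤ t →
            P {ω | t * Real.sqrt n ≤ |‖mApp A (X ω)‖ - Real.sqrt n|} ≤
              ENNReal.ofReal (C * Real.exp
                (-(c * ((n : ℝ) / (opNorm A ^ 2 * b ^ 2)) ^ (α/2) *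
                  min (t ^ (2 + α)) t))) := by
  refine ⟨cz/42, 30, by have := cz_pos; positivity, by norm_num, ?_⟩
  intro n Ω _ P hP X f α b A hD hf hI hα hα2 hψ hA t ht
  rcases Nat.eq_zero_or_pos n with rfl | hn
  · refine prob_le_one.trans ?_
    have e : ((0:ℕ) / (opNorm A ^ 2 * b ^ 2) : ℝ) ^ (α/2) = 0 := by
      rw [Nat.cast_zero, zero_div, zero_rpow (by linarith)]
    rw [e]
    norm_num
  obtain ⟨hX, hmap⟩ := hD
  have hPL : PLMeas (P.map X) := by rw [hmap]; exact plmeas_of_logconcave hf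
  have hn' : (0:ℝ) < n := by exact_mod_cast hn
  have hsn : 0 < √(n:ℝ) := Real.sqrt_pos.2 hn'
  have hb := b_pos hn hI hψ
  set T := LinearMap.toContinuousLinearMap (Matrix.toEuclideanLin A) with hT
  have hTA : ∀ x, T x = mApp A x := fun x => rfl
  have hop : 0 < opNorm A := by
    rw [opNorm, norm_pos_iff]
    intro h0
    have h1 := hs_moment hX hPL hI A
    have h2 : ∀ x, mApp A x = 0 := fun x => by
      rw [← hTA, hT, h0]; rfl
    simp_rw [h2] at h1
    rw [hA] at h1
    have h3 : ENNReal.ofReal (n:ℝ) = 0 := by rw [← h1]; simp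
    rw [ENNReal.ofReal_eq_zero] at h3
    linarith
  set L := (√(n:ℝ))⁻¹ • T with hL
  have hLx : ∀ x, L x = (√(n:ℝ))⁻¹ • mApp A x := fun x => rfl
  have hLm : Measurable L := L.continuous.measurable
  have hLX : Measurable (fun ω => L (X ω)) := hLm.comp hX
  have hLnorm : ‖L‖ = opNorm A / √n := by
    rw [hL, norm_smul, norm_inv, Real.norm_of_nonneg hsn.le, inv_mul_eq_div]; rfl
  set ρ := (P.map X).map L with hρ
  have hPX : IsProbabilityMeasure (P.map X) := Measure.isProbabilityMeasure_map hX.aemeasurable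
  have hPρ : IsProbabilityMeasure ρ := Measure.isProbabilityMeasure_map hLm.aemeasurable
  have hρ' : ρ = P.map (fun ω => L (X ω)) := Measure.map_map hLm hX
  have hLnx : ∀ x, ‖L x‖ = ‖mApp A x‖ / √n := fun x => by
    rw [hLx, norm_smul, norm_inv, Real.norm_of_nonneg hsn.le, inv_mul_eq_div]
  have hE : ∫⁻ z, ENNReal.ofReal (‖z‖^2) ∂ρ = 1 := by
    rw [hρ', lintegral_map (by fun_prop) hLX]
    have : ∀ ω, ENNReal.ofReal (‖L (X ω)‖^2) = ENNReal.ofReal (1/n) * ENNReal.ofReal (‖mApp A (X ω)‖^2) := by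
      intro ω
      rw [← ENNReal.ofReal_mul (by positivity), hLnx, div_pow, Real.sq_sqrt hn'.le]
      congr 1; ring
    simp_rw [this]
    rw [lintegral_const_mul' _ _ ENNReal.ofReal_ne_top, hs_moment hX hPL hI A, hA, ← ENNReal.ofReal_mul (by positivity),
      one_div_mul_cancel hn'.ne', ENNReal.ofReal_one]
  have hε : 0 < opNorm A * b / √n := by positivity
  have hmom : ∀ θ : EuclideanSpace ℝ (Fin n), ∀ p : ℝ, 2 ≤ p →
      ∫⁻ z, ENNReal.ofReal (|⟪z, θ⟫| ^ p) ∂ρ ≤ ENNReal.ofReal ((opNorm A * b / √n * p ^ (1/α) * ‖θ‖) ^ p) := by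
    intro θ p hp
    rw [hρ', lintegral_map (by fun_prop) hLX]
    have h1 := inner_moment hX hPL hI hψ (ContinuousLinearMap.adjoint L θ) hp
    simp_rw [ContinuousLinearMap.adjoint_inner_right] at h1
    refine h1.trans (ENNReal.ofReal_le_ofReal ?_)
    have hp0 : 0 < p ^ (1/α) := rpow_pos_of_pos (by linarith) _
    refine rpow_le_rpow (by positivity) ?_ (by linarith)
    have h2 : ‖ContinuousLinearMap.adjoint L θ‖ ≤ opNorm A / √n * ‖θ‖ := by
      rw [← hLnorm, ← LinearIsometryEquiv.norm_map ContinuousLinearMap.adjoint L]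
      exact ContinuousLinearMap.le_opNorm _ _
    calc _ ≤ b * p ^ (1/α) * (opNorm A / √n * ‖θ‖) := by gcongr
      _ = _ := by ring
  have hfin := core (hPL.map L) hE hε hα hα2 hmom ht
  have eS : (opNorm A * b / √n) ^ (-α) = ((n : ℝ) / (opNorm A ^ 2 * b ^ 2)) ^ (α/2) := by
    have e1 : (n : ℝ) / (opNorm A ^ 2 * b ^ 2) = ((opNorm A * b / √n)⁻¹) ^ (2:ℝ) := by
      rw [rpow_two, inv_div, div_pow, Real.sq_sqrt hn'.le, mul_pow]
    rw [e1, ← rpow_mul (by positivity), rpow_neg hε.le, inv_rpow hε.le]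
    congr 2; ring
  rw [eS] at hfin
  have hset : P {ω | t * √n ≤ |‖mApp A (X ω)‖ - √n|} = ρ {z | t ≤ |‖z‖ - 1|} := by
    rw [hρ', Measure.map_apply hLX (measurableSet_le measurable_const (by fun_prop))]
    congr 1
    ext ω
    simp only [Set.mem_ofPred_eq, Set.mem_preimage]
    have e : ‖mApp A (X ω)‖ - √n = (‖L (X ω)‖ - 1) * √n := by
      rw [hLnx]; field_simp
    rw [e, abs_mul, abs_of_pos hsn]
    exact mul_le_mul_iff_left₀ hsn
  rw [hset, ← ofReal_measureReal]
  exact ENNReal.ofReal_le_ofReal hfin
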